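/- arXiv:1406.3464 — 2 statements merged into one kernel-verified Lean document; each statement's English description precedes it below -/
import Mathlib

section
/- If every 3-maximal subgroup of a finite group G is K-𝔘-subnormal in G, then every maximal subgroup of G is either supersoluble or an SDH-group. -/
open Subgroup

/-- A finite group is supersoluble if it has a normal series, all of whose terms are
normal in the whole group, with cyclic factors. -/
def IsSupersoluble (G : Type*) [Group G] : Prop :=
  ∃ (n : ℕ) (c : Fin (n + 1) → Subgroup G) (hc : ∀ i, (c i).Normal),
    c 0 = ⊥ ∧ c (Fin.last n) = ⊤ ∧
    ∀ i : Fin n, c i.castSucc ≤ c i.succ ∧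
      haveI := (hc i.castSucc).subgroupOf (c i.succ)
      IsCyclic (↥(c i.succ) ⧸ ((c i.castSucc).subgroupOf (c i.succ)))

/-- `H` is a maximal subgroup of `K`, where `H ≤ K` are subgroups of a common group. -/
def IsMaximalIn {G : Type*} [Group G] (H K : Subgroup G) : Prop :=
  H ≤ K ∧ IsCoatom (H.subgroupOf K)

/-- The `n`-maximal subgroups of `G`: `0`-maximal is `G` itself, and an `(n+1)`-maximal
subgroup is a maximal subgroup of some `n`-maximal subgroup. -/
def IsNMaximal {G : Type*} [Group G] : ℕ → Subgroup G → Prop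
  | 0, H => H = ⊤
  | n + 1, H => ∃ K : Subgroup G, IsNMaximal n K ∧ IsMaximalIn H K

/-- `H` is `K`-`𝔘`-subnormal in `K`: there is a chain of subgroups
`H = H₀ ≤ H₁ ≤ ⋯ ≤ Hₜ = K` such that at each step either `H_{i-1}` is normal in `H_i`
or `H_i` modulo the core of `H_{i-1}` in `H_i` is supersoluble. -/
def IsKUSubnormalIn {G : Type*} [Group G] (H K : Subgroup G) : Prop :=
  ∃ (n : ℕ) (c : Fin (n + 1) → Subgroup G),
    c 0 = H ∧ c (Fin.last n) = K ∧
    ∀ i : Fin n, c i.castSucc ≤ c i.succ ∧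
      (((c i.castSucc).subgroupOf (c i.succ)).Normal ∨
        IsSupersoluble (↥(c i.succ) ⧸ ((c i.castSucc).subgroupOf (c i.succ)).normalCore))

/-- `H` is `K`-`𝔘`-subnormal in `G`. -/
def IsKUSubnormal {G : Type*} [Group G] (H : Subgroup G) : Prop :=
  IsKUSubnormalIn H ⊤

/-- `H` is `𝔘`-subnormal in `G`: there is a chain of subgroups
`H = H₀ ≤ H₁ ≤ ⋯ ≤ Hₙ = G` with `H_i` modulo the core of `H_{i-1}` in `H_i`
supersoluble at each step. -/
def IsUSubnormal {G : Type*} [Group G] (H : Subgroup G) : Prop :=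
  ∃ (n : ℕ) (c : Fin (n + 1) → Subgroup G),
    c 0 = H ∧ c (Fin.last n) = ⊤ ∧
    ∀ i : Fin n, c i.castSucc ≤ c i.succ ∧
      IsSupersoluble (↥(c i.succ) ⧸ ((c i.castSucc).subgroupOf (c i.succ)).normalCore)

/-- The supersoluble residual `G^𝔘` of `G`: the intersection of all normal subgroups `N`
of `G` with `G/N` supersoluble. -/
def ssResidual (G : Type*) [Group G] : Subgroup G :=
  ⨅ N ∈ {N : Subgroup G | ∃ hN : N.Normal, haveI := hN; IsSupersoluble (G ⧸ N)}, N

/-- `N` is a minimal normal subgroup of `G`. -/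
def IsMinimalNormal {G : Type*} [Group G] (N : Subgroup G) : Prop :=
  N.Normal ∧ N ≠ ⊥ ∧ ∀ M : Subgroup G, M.Normal → M ≤ N → M ≠ ⊥ → M = N

/-- `G` is minimal nonsupersoluble: not supersoluble, but all proper subgroups are. -/
def IsMinimalNonsupersoluble (G : Type*) [Group G] : Prop :=
  ¬ IsSupersoluble G ∧ ∀ H : Subgroup G, H ≠ ⊤ → IsSupersoluble H

/-- `G` is an `SDH`-group: minimal nonsupersoluble with `G^𝔘` a minimal normal subgroup. -/
def IsSDH (G : Type*) [Group G] : Prop :=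
  IsMinimalNonsupersoluble G ∧ IsMinimalNormal (ssResidual G)

/-- `H` is a Sylow `p`-subgroup of its ambient (finite) group. -/
def IsSylowSubgroup {G : Type*} [Group G] (p : ℕ) (H : Subgroup G) : Prop :=
  IsPGroup p H ∧ ¬ p ∣ H.index

/-- A finite group is Ore dispersive if, enumerating the prime divisors of `|G|`
in decreasing order as `p₁ > p₂ > ⋯ > pₙ`, for every `i` it has a normal subgroup of
order `p₁^{a₁} ⋯ p_i^{a_i}`. -/
def OreDispersive (G : Type*) [Group G] : Prop :=
  ∀ p : ℕ, p.Prime → ∃ N : Subgroup G, N.Normal ∧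
    Nat.card N =
      ∏ q ∈ (Nat.card G).primeFactors.filter (fun q => p ≤ q),
        q ^ (Nat.card G).factorization q

/-- `A/B` is a chief factor of `G`. -/
def IsChiefFactor {G : Type*} [Group G] (A B : Subgroup G) : Prop :=
  A.Normal ∧ B ≤ A ∧ ∃ hB : B.Normal,
    haveI := hB
    IsMinimalNormal (A.map (QuotientGroup.mk' B))

/-- The subgroups `H` and `K` of `G` are conjugate in `G`. -/
def ConjSubgroup {G : Type*} [Group G] (H K : Subgroup G) : Prop :=
  ∃ g : G, K = H.map (MulAut.conj g).toMonoidHom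

/-- The Frattini subgroup of a subgroup `H` of `G`, as a subgroup of `G`. -/
def frattiniIn {G : Type*} [Group G] (H : Subgroup G) : Subgroup G :=
  (frattini H).map H.subtype

/-- `G = P ⋊ (Q ⋊ R)` as an internal statement about subgroups `P`, `Q`, `R` of `G`. -/
def IsInternalSemidirect3 {G : Type*} [Group G] (P Q R : Subgroup G) : Prop :=
  P.Normal ∧ P ⊓ (Q ⊔ R) = ⊥ ∧ P ⊔ Q ⊔ R = ⊤ ∧
    (Q.subgroupOf (Q ⊔ R)).Normal ∧ Q ⊓ R = ⊥

/-- `G = P ⋊ (Q ⋊ (R ⋊ T))` as an internal statement about subgroups of `G`. -/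
def IsInternalSemidirect4 {G : Type*} [Group G] (P Q R T : Subgroup G) : Prop :=
  P.Normal ∧ P ⊓ (Q ⊔ R ⊔ T) = ⊥ ∧ P ⊔ Q ⊔ R ⊔ T = ⊤ ∧
    (Q.subgroupOf (Q ⊔ R ⊔ T)).Normal ∧ Q ⊓ (R ⊔ T) = ⊥ ∧
    (R.subgroupOf (R ⊔ T)).Normal ∧ R ⊓ T = ⊥


def SSq {G : Type*} [Group G] (K : Subgroup G) : Prop :=
  ∀ N : Subgroup G, N.Normal → K ≤ N → N ≠ ⊤ → ∃ x, x ∉ N ∧ (N ⊔ zpowers x).Normal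

def SS (G : Type*) [Group G] : Prop := SSq (⊥ : Subgroup G)

theorem SSq.mono {G : Type*} [Group G] {K J : Subgroup G} (h : SSq K) (hKJ : K ≤ J) : SSq J :=
  fun N hN hJ ht => h N hN (hKJ.trans hJ) ht

theorem ss_iff_surj {G H : Type*} [Group G] [Group H] (f : G →* H)
    (hf : Function.Surjective f) : SS H ↔ SSq f.ker := by
  constructor
  · intro h N hN hK ht
    have e : (N.map f).comap f = N := by
      rw [comap_map_eq, sup_eq_left]; exact hK
    obtain ⟨y, hy, hn⟩ := h (N.map f) (hN.map f hf) bot_le (by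
      intro h1; rw [h1] at e; exact ht (by rw [← e, comap_top]))
    obtain ⟨x, rfl⟩ := hf y
    refine ⟨x, fun hx => hy (mem_map_of_mem f hx), ?_⟩
    have := hn.comap f
    rwa [← MonoidHom.map_zpowers, ← Subgroup.map_sup, comap_map_eq,
      sup_eq_left.2 (hK.trans le_sup_left)] at this
  · intro h N hN _ ht
    obtain ⟨x, hx, hn⟩ := h (N.comap f) (hN.comap f) (MonoidHom.ker_le_comap f N) (by
      intro h1; apply ht
      rw [← map_comap_eq_self_of_surjective hf N, h1, map_top_of_surjective f hf])
    refine ⟨f x, hx, ?_⟩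
    have := hn.map f hf
    rwa [Subgroup.map_sup, map_comap_eq_self_of_surjective hf, MonoidHom.map_zpowers] at this

theorem ss_quot_iff {G : Type*} [Group G] (K : Subgroup G) [K.Normal] : SS (G ⧸ K) ↔ SSq K := by
  rw [ss_iff_surj (QuotientGroup.mk' K) (QuotientGroup.mk'_surjective K), QuotientGroup.ker_mk']

theorem SS.equiv {G H : Type*} [Group G] [Group H] (e : G ≃* H) (h : SS G) : SS H := by
  rw [ss_iff_surj e.toMonoidHom e.surjective]
  exact SSq.mono h bot_le

theorem SS.surj {G H : Type*} [Group G] [Group H] (h : SS G) (f : G →* H)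
    (hf : Function.Surjective f) : SS H := by
  rw [ss_iff_surj f hf]
  exact SSq.mono h bot_le

theorem ss_key {G : Type*} [Group G] [Finite G] {K H N : Subgroup G} (hKn : K.Normal)
    (hK : SSq K) (hKH : K ⊓ H ≤ N) (hHN : ¬ H ≤ N) :
    ∃ J : Subgroup G, J.Normal ∧ ∃ y ∈ H, y ∉ N ∧ N ⊔ zpowers y = N ⊔ (J ⊓ H) := by
  obtain ⟨J, ⟨hJn, hKJ, hJH⟩, hmax⟩ :=
    Set.Finite.exists_maximal (Set.toFinite {J : Subgroup G | J.Normal ∧ K ≤ J ∧ J ⊓ H ≤ N})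
      ⟨K, hKn, le_rfl, hKH⟩
  obtain ⟨x, hx, hn⟩ := hK J hJn hKJ (by rintro rfl; exact hHN (by simpa using hJH))
  have h1 : ¬ (J ⊔ zpowers x) ⊓ H ≤ N := by
    intro h
    have := hmax (y := J ⊔ zpowers x) ⟨hn, hKJ.trans le_sup_left, h⟩ le_sup_left
    exact hx (this ((le_sup_right : zpowers x ≤ _) (mem_zpowers x)))
  set B := (J ⊔ zpowers x) ⊓ H with hB
  have h2 : B.map (QuotientGroup.mk' J) ≤ zpowers (QuotientGroup.mk' J x) := by
    rw [← MonoidHom.map_zpowers]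
    refine (map_mono inf_le_left).trans ?_
    rw [Subgroup.map_sup]
    simp
  have h3 : IsCyclic (B.map (QuotientGroup.mk' J)) :=
    isCyclic_of_injective (inclusion h2) (inclusion_injective h2)
  obtain ⟨g, hg⟩ := (Subgroup.isCyclic_iff_exists_zpowers_eq_top _).1 h3
  have hgm : g ∈ B.map (QuotientGroup.mk' J) := hg ▸ mem_zpowers g
  obtain ⟨y, hy, rfl⟩ := hgm
  have h4 : B ≤ N ⊔ zpowers y := by
    intro z hz
    have : QuotientGroup.mk' J z ∈ zpowers (QuotientGroup.mk' J y) := by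
      rw [hg]; exact mem_map_of_mem _ hz
    obtain ⟨n, hn⟩ := mem_zpowers_iff.1 this
    rw [← map_zpow] at hn
    have h5 : (y ^ n)⁻¹ * z ∈ J := by
      rw [← QuotientGroup.eq]; exact hn
    have h6 : (y ^ n)⁻¹ * z ∈ N := hJH ⟨h5, H.mul_mem (H.inv_mem (H.zpow_mem hy.2 n)) hz.2⟩
    have : z = y ^ n * ((y ^ n)⁻¹ * z) := by group
    rw [this]
    exact mul_mem ((le_sup_right : zpowers y ≤ N ⊔ zpowers y) (zpow_mem (mem_zpowers y) n))
      ((le_sup_left : N ≤ N ⊔ zpowers y) h6)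
  refine ⟨_, hn, y, hy.2, fun hyN => h1 ?_, le_antisymm (sup_le le_sup_left ?_)
    (sup_le le_sup_left h4)⟩
  · refine h4.trans (sup_le le_rfl ?_); rwa [zpowers_le]
  · rw [zpowers_le]
    exact (le_sup_right : B ≤ N ⊔ B) hy

theorem SS.subgroup {G : Type*} [Group G] [Finite G] (h : SS G) (H : Subgroup G) : SS H := by
  intro N hN _ ht
  obtain ⟨J, hJ, y, hyH, hyN, e⟩ := ss_key (K := ⊥) (H := H) (N := N.map H.subtype)
    inferInstance h (by simp) (by
      intro h1; apply ht; rw [eq_top_iff]; intro x _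
      obtain ⟨z, hz, hzx⟩ := h1 x.2
      have : z = x := Subtype.ext hzx
      exact this ▸ hz)
  refine ⟨⟨y, hyH⟩, fun h1 => hyN ⟨_, h1, rfl⟩, ?_⟩
  have e2 : N ⊔ zpowers (⟨y, hyH⟩ : H) = N ⊔ J.subgroupOf H := by
    apply map_injective H.subtype_injective
    rw [Subgroup.map_sup, Subgroup.map_sup, MonoidHom.map_zpowers, subgroupOf_map_subtype]
    exact e
  rw [e2]
  infer_instance

theorem ss_ker {G H : Type*} [Group G] [Group H] [Finite H] (f : G →* H) (h : SS H) :
    SSq f.ker := by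
  rw [← ss_quot_iff]
  exact (h.subgroup f.range).equiv (QuotientGroup.quotientKerEquivRange f).symm

theorem SSq.inf {G : Type*} [Group G] [Finite G] {K L : Subgroup G} (hKn : K.Normal)
    (hLn : L.Normal) (hK : SSq K) (hL : SSq L) : SSq (K ⊓ L) := by
  intro N hN hKL ht
  by_cases h : L ≤ N
  · exact hL N hN h ht
  · obtain ⟨J, hJ, y, hyH, hyN, e⟩ := ss_key hKn hK hKL h
    exact ⟨y, hyN, e ▸ inferInstance⟩

theorem ss_chief {G : Type*} [Group G] [Finite G] {K N H : Subgroup G} (hKn : K.Normal)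
    (hK : SSq K) (hN : N.Normal) (hH : H.Normal) (hKH : K ⊓ H ≤ N)  (h : ¬ H ≤ N) :
    ∃ y ∈ H, y ∉ N ∧ (N ⊔ zpowers y).Normal := by
  obtain ⟨J, hJ, y, hyH, hyN, e⟩ := ss_key hKn hK hKH h
  exact ⟨y, hyH, hyN, e ▸ inferInstance⟩

theorem ssq_of_comm {G : Type*} [Group G] {K : Subgroup G} (h : commutator G ≤ K) : SSq K := by
  intro N hN hK ht
  obtain ⟨x, hx⟩ : ∃ x, x ∉ N := by
    by_contra! h1; exact ht (eq_top_iff.2 fun x _ => h1 x)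
  exact ⟨x, hx, Normal.of_commutator_le G ((h.trans hK).trans le_sup_left)⟩

theorem ssq_of_zpowers {G : Type*} [Group G] {K : Subgroup G} {y : G}
    (hn : K.Normal) (hy : (K ⊔ zpowers y).Normal) (h : SSq (K ⊔ zpowers y)) : SSq K := by
  intro N hN hK ht
  by_cases hyN : y ∈ N
  · exact h N hN (sup_le hK (by rwa [zpowers_le])) ht
  · refine ⟨y, hyN, ?_⟩
    have : N ⊔ zpowers y = N ⊔ (K ⊔ zpowers y) := by
      rw [← sup_assoc, sup_eq_left.2 hK]
    rw [this]; infer_instance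

/-- existence of the residual -/
theorem exists_residual (G : Type*) [Group G] [Finite G] :
    ∃ R : Subgroup G, R.Normal ∧ SSq R ∧ ∀ J : Subgroup G, J.Normal → SSq J → R ≤ J := by
  obtain ⟨R, ⟨hn, hR⟩, hmin⟩ :=
    Set.Finite.exists_minimal (Set.toFinite {J : Subgroup G | J.Normal ∧ SSq J})
      ⟨⊤, inferInstance, fun N _ h h1 => absurd (top_le_iff.1 h) h1⟩
  refine ⟨R, hn, hR, fun J hJ hs => ?_⟩
  exact (hmin (y := R ⊓ J) ⟨inferInstance, hR.inf hn hJ hs⟩ inf_le_left).trans inf_le_right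


theorem ss_of_isSupersoluble {G : Type*} [Group G] (h : IsSupersoluble G) : SS G := by
  obtain ⟨n, c, hc, h0, hl, hi⟩ := h
  intro N hN _ ht
  have : ∃ i : Fin n, c i.castSucc ≤ N ∧ ¬ c i.succ ≤ N := by
    by_contra! h1
    have : ∀ i, c i ≤ N := fun i => by
      induction i using Fin.induction with
      | zero => rw [h0]; exact bot_le
      | succ i ih => exact h1 i ih
    exact ht (top_le_iff.1 (hl ▸ this (Fin.last n)))
  obtain ⟨i, h1, h2⟩ := this
  obtain ⟨h3, h4⟩ := hi i
  haveI := (hc i.castSucc).subgroupOf (c i.succ)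
  obtain ⟨q, hq⟩ := h4
  obtain ⟨x, rfl⟩ := QuotientGroup.mk_surjective q
  have h5 : c i.succ ≤ N ⊔ zpowers (x : G) := by
    intro z hz
    obtain ⟨k, hk⟩ := hq (QuotientGroup.mk ⟨z, hz⟩)
    have hk : (QuotientGroup.mk x : _ ⧸ (c i.castSucc).subgroupOf (c i.succ)) ^ k
      = QuotientGroup.mk ⟨z, hz⟩ := hk
    rw [← QuotientGroup.mk_zpow, QuotientGroup.eq, mem_subgroupOf] at hk
    have h6 : ((x : G) ^ k)⁻¹ * z ∈ N := h1 (by simpa using hk)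
    have : z = (x : G) ^ k * (((x : G) ^ k)⁻¹ * z) := by group
    rw [this]
    exact mul_mem ((le_sup_right : zpowers (x : G) ≤ N ⊔ _) (zpow_mem (mem_zpowers _) k))
      ((le_sup_left : N ≤ N ⊔ _) h6)
  refine ⟨x, fun hx => h2 (h5.trans (sup_le le_rfl (by rwa [zpowers_le]))), ?_⟩
  have : N ⊔ zpowers (x : G) = N ⊔ c i.succ :=
    le_antisymm (sup_le le_sup_left (by rw [zpowers_le]; exact (le_sup_right : _ ≤ N ⊔ c i.succ) x.2))
      (sup_le le_sup_left h5)
  have := hc i.succ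
  rw [‹N ⊔ zpowers (x : G) = _›]; infer_instance

theorem cyc_step {G : Type*} [Group G] (N : Subgroup G) (hN : N.Normal) (x : G) :
    haveI := hN.subgroupOf (N ⊔ zpowers x)
    IsCyclic (↥(N ⊔ zpowers x) ⧸ (N.subgroupOf (N ⊔ zpowers x))) := by
  haveI := hN.subgroupOf (N ⊔ zpowers x)
  have hx : x ∈ N ⊔ zpowers x := (le_sup_right : zpowers x ≤ _) (mem_zpowers x)
  refine ⟨QuotientGroup.mk ⟨x, hx⟩, fun q => ?_⟩
  obtain ⟨⟨z, hz⟩, rfl⟩ := QuotientGroup.mk_surjective q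
  have hz' := hz
  rw [sup_comm, mem_sup_of_normal_right] at hz'
  obtain ⟨a, ⟨k, rfl⟩, b, hb, rfl⟩ := hz'
  refine ⟨k, ?_⟩
  show (QuotientGroup.mk ⟨x, hx⟩ : _ ⧸ N.subgroupOf (N ⊔ zpowers x)) ^ k = _
  rw [← QuotientGroup.mk_zpow, QuotientGroup.eq, mem_subgroupOf]
  simpa using hb

theorem cyc_step' {G : Type*} [Group G] (N : Subgroup G) (hN : N.Normal) (x : G) (A : Subgroup G)
    (hA : A = N ⊔ zpowers x) :
    haveI := hN.subgroupOf A
    IsCyclic (↥A ⧸ (N.subgroupOf A)) := by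
  subst hA
  exact cyc_step N hN x

theorem isSupersoluble_of_ss {G : Type*} [Group G] [Finite G] (h : SS G) : IsSupersoluble G := by
  have key : ∀ N : Subgroup G, N.Normal → ∃ (n : ℕ) (c : Fin (n + 1) → Subgroup G)
      (hc : ∀ i, (c i).Normal), c 0 = N ∧ c (Fin.last n) = ⊤ ∧
      ∀ i : Fin n, c i.castSucc ≤ c i.succ ∧
      haveI := (hc i.castSucc).subgroupOf (c i.succ)
      IsCyclic (↥(c i.succ) ⧸ ((c i.castSucc).subgroupOf (c i.succ))) := by
    intro N
    induction N using WellFoundedGT.induction with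
    | ind N ih =>
    intro hN
    by_cases ht : N = ⊤
    · exact ⟨0, fun _ => N, fun _ => hN, rfl, ht, fun i => i.elim0⟩
    · obtain ⟨x, hx, hn⟩ := h N hN bot_le ht
      have hlt : N < N ⊔ zpowers x := lt_of_le_of_ne le_sup_left (fun e => hx (by
        rw [e]; exact (le_sup_right : zpowers x ≤ _) (mem_zpowers x)))
      obtain ⟨n, c, hc, h0, hl, hi⟩ := ih _ hlt hn
      refine ⟨n + 1, Fin.cons N c, fun i => ?_, rfl, ?_, fun i => ?_⟩
      · refine Fin.cases ?_ (fun i => ?_) i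
        · exact hN
        · exact hc i
      · rw [← Fin.succ_last]; exact hl
      · refine Fin.cases ?_ (fun i => ?_) i
        · exact ⟨(le_sup_left : N ≤ N ⊔ zpowers x).trans h0.ge, cyc_step' N hN x _ h0⟩
        · exact hi i
  exact key ⊥ inferInstance

theorem isSupersoluble_iff {G : Type*} [Group G] [Finite G] : IsSupersoluble G ↔ SS G :=
  ⟨ss_of_isSupersoluble, isSupersoluble_of_ss⟩

theorem ss_prime {G : Type*} [Group G] [Finite G] (h : SS G) {H : Subgroup G} (hH : H.Normal)
    (hb : H ≠ ⊥) : ∃ y ∈ H, (orderOf y).Prime ∧ (zpowers y).Normal := by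
  obtain ⟨y, hy, hy1, hn⟩ := ss_chief (K := ⊥) (N := ⊥) (H := H) inferInstance h inferInstance hH
    (by simp) (by simpa using hb)
  rw [bot_sup_eq] at hn
  have h1 : orderOf y ≠ 1 := by rw [Ne, orderOf_eq_one_iff]; simpa using hy1
  obtain ⟨p, hp, m, hm⟩ := Nat.exists_prime_and_dvd h1
  have h0 := orderOf_pos y
  have hm0 : m ≠ 0 := by rintro rfl; rw [Nat.mul_zero] at hm; omega
  have ho : orderOf (y ^ m) = p := by
    rw [orderOf_pow_of_dvd hm0 ⟨p, by rw [hm, mul_comm]⟩, hm, Nat.mul_div_cancel _ (Nat.pos_of_ne_zero hm0)]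
  refine ⟨y ^ m, pow_mem hy m, ho ▸ hp, ⟨fun z hz g => ?_⟩⟩
  obtain ⟨k, rfl⟩ := mem_zpowers_iff.1 hz
  obtain ⟨j, hj⟩ := mem_zpowers_iff.1 (hn.conj_mem y (mem_zpowers y) g)
  rw [← conj_zpow, ← conj_pow, ← hj]
  refine zpow_mem (mem_zpowers_iff.2 ⟨j, ?_⟩) k
  rw [← zpow_natCast, ← zpow_natCast, zpow_comm]

theorem SS.solvable {G : Type*} [Group G] [Finite G] (h : SS G) : Group.IsSolvable G := by
  obtain ⟨n, hn⟩ : ∃ n, Nat.card G = n := ⟨_, rfl⟩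
  induction n using Nat.strong_induction_on generalizing G with
  | _ n ih =>
  by_cases hG : (⊤ : Subgroup G) = ⊥
  · have : Subsingleton G := subsingleton_iff_bot_eq_top.1 hG.symm |> fun h => by
      exact (Subgroup.subsingleton_iff.1 h)
    infer_instance
  obtain ⟨y, -, hp, hy⟩ := ss_prime h (H := ⊤) inferInstance hG
  have : Group.IsSolvable (G ⧸ zpowers y) := by
    refine ih _ ?_ (h.surj (QuotientGroup.mk' _) (QuotientGroup.mk'_surjective _)) rfl
    rw [← hn, card_eq_card_quotient_mul_card_subgroup (zpowers y), Nat.card_zpowers]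
    exact lt_mul_of_one_lt_right Nat.card_pos hp.one_lt
  exact Group.isSolvable_of_ker_le_range (zpowers y).subtype (QuotientGroup.mk' (zpowers y)) (by simp)

theorem conj_zpow_iter {G : Type*} [Group G] {g y : G} {k : ℤ} (h : g * y * g⁻¹ = y ^ k) (n : ℕ) :
    g ^ n * y * (g ^ n)⁻¹ = y ^ (k ^ n) := by
  induction n with
  | zero => simp
  | succ n ih =>
    rw [pow_succ, mul_inv_rev]
    have : g ^ n * g * y * (g⁻¹ * (g ^ n)⁻¹) = g ^ n * (g * y * g⁻¹) * (g ^ n)⁻¹ := by group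
    rw [this, h, ← conj_zpow, ih, ← zpow_mul, pow_succ]

theorem commute_of_prime {G : Type*} [Group G] {y : G} {q : ℕ} (hq : q.Prime)
    (ho : orderOf y = q) {g : G} (hg : g * y * g⁻¹ ∈ zpowers y) : Commute (g ^ (q - 1)) y := by
  obtain ⟨k, hk⟩ := mem_zpowers_iff.1 hg
  have h1 := conj_zpow_iter hk.symm (q - 1)
  have hkq : IsCoprime k q := by
    rw [isCoprime_comm, Prime.coprime_iff_not_dvd (Nat.prime_iff_prime_int.1 hq), ← ho, orderOf_dvd_iff_zpow_eq_one, hk]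
    intro h2
    have : y = 1 := by simpa using h2
    rw [this, orderOf_one] at ho
    exact hq.one_lt.ne ho
  have h2 := Int.ModEq.pow_card_sub_one_eq_one hq hkq
  have h3 : y ^ (k ^ (q - 1)) = y ^ (1 : ℤ) := by
    rw [zpow_eq_zpow_iff_modEq, ho]; exact h2
  rw [h3, zpow_one] at h1
  exact mul_inv_eq_iff_eq_mul.1 h1

theorem commute_of_normal {G : Type*} [Group G] {y g h : G}
    (hg : ∀ x ∈ zpowers y, g * x * g⁻¹ ∈ zpowers y) (hh : ∀ x ∈ zpowers y, h * x * h⁻¹ ∈ zpowers y) :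
    g * h * y * (g * h)⁻¹ = h * g * y * (h * g)⁻¹ := by
  obtain ⟨k, hk⟩ := mem_zpowers_iff.1 (hg y (mem_zpowers y))
  obtain ⟨l, hl⟩ := mem_zpowers_iff.1 (hh y (mem_zpowers y))
  have h1 : g * h * y * (g * h)⁻¹ = g * (h * y * h⁻¹) * g⁻¹ := by group
  have h2 : h * g * y * (h * g)⁻¹ = h * (g * y * g⁻¹) * h⁻¹ := by group
  rw [h1, h2, ← hl, ← hk, ← conj_zpow, ← conj_zpow, ← hl, ← hk, ← zpow_mul, ← zpow_mul, mul_comm]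

theorem commutator_commute {G : Type*} [Group G] {y : G} (hy : (zpowers y).Normal) (g h : G) :
    Commute (g * h * g⁻¹ * h⁻¹) y := by
  have := commute_of_normal (y := y) (g := g⁻¹) (h := h⁻¹) (fun x hx => hy.conj_mem x hx _)
    (fun x hx => hy.conj_mem x hx _)
  show (g * h * g⁻¹ * h⁻¹) * y = y * (g * h * g⁻¹ * h⁻¹)
  have h2 : g * h * (g⁻¹ * h⁻¹ * y * (g⁻¹ * h⁻¹)⁻¹) * g⁻¹ * h⁻¹= g * h * (h⁻¹ * g⁻¹ * y * (h⁻¹ * g⁻¹)⁻¹) * g⁻¹ * h⁻¹ := by rw [this]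
  have h3 : g * h * (g⁻¹ * h⁻¹ * y * (g⁻¹ * h⁻¹)⁻¹) * g⁻¹ * h⁻¹ = g * h * g⁻¹ * h⁻¹ * y := by group
  rw [h3] at h2
  rw [h2]; group

/-- the subgroup generated by commutators and (p-1)-th powers -/
def Dp {G : Type*} [Group G] (p : ℕ) (S : Subgroup G) : Subgroup G :=
  closure {x | ∃ g ∈ S, ∃ h ∈ S, x = (g * h * g⁻¹ * h⁻¹) ∨ x = g ^ (p - 1)}

theorem Dp_normal {G : Type*} [Group G] (p : ℕ) (S : Subgroup G) (hS : S.Normal) :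
    (Dp p S).Normal := by
  have key : ∀ a : G, ∀ x ∈ Dp p S, a * x * a⁻¹ ∈ Dp p S := by
    intro a x hx
    have : Dp p S ≤ (Dp p S).comap (MulAut.conj a).toMonoidHom := by
      unfold Dp
      rw [closure_le]
      rintro x ⟨g, hg, h, hh, hx⟩
      refine subset_closure ⟨a * g * a⁻¹, hS.conj_mem g hg a, a * h * a⁻¹, hS.conj_mem h hh a, ?_⟩
      rcases hx with rfl | rfl
      · left; simp
        try group
      · right; simp
    simpa using this hx
  exact ⟨fun x hx a => key a x hx⟩


theorem eq_one_of_pow_coprime {G : Type*} [Group G] {x : G} {m n : ℕ} (h : Nat.Coprime m n)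
    (h1 : x ^ m = 1) (h2 : x ^ n = 1) : x = 1 := by
  have := Nat.dvd_gcd (orderOf_dvd_of_pow_eq_one h1) (orderOf_dvd_of_pow_eq_one h2)
  rw [h.gcd_eq_one, Nat.dvd_one, orderOf_eq_one_iff] at this
  exact this

theorem exists_minimalNormal {G : Type*} [Group G] [Finite G] {N : Subgroup G} (hN : N.Normal)
    (hb : N ≠ ⊥) : ∃ V, IsMinimalNormal V ∧ V ≤ N := by
  obtain ⟨V, ⟨hV, hVb, hVN⟩, hmin⟩ :=
    Set.Finite.exists_minimal (Set.toFinite {J : Subgroup G | J.Normal ∧ J ≠ ⊥ ∧ J ≤ N})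
      ⟨N, hN, hb, le_rfl⟩
  exact ⟨V, ⟨hV, hVb, fun M hM hMV hMb => le_antisymm hMV
    (hmin (y := M) ⟨hM, hMb, hMV.trans hVN⟩ hMV)⟩, hVN⟩

theorem minNormal_elem {G : Type*} [Group G] [Finite G] [Group.IsSolvable G] {N : Subgroup G}
    (hN : IsMinimalNormal N) : ∃ p : ℕ, p.Prime ∧ (∀ a ∈ N, ∀ b ∈ N, a * b = b * a) ∧
      ∀ a ∈ N, a ^ p = 1 := by
  obtain ⟨hn, hb, hmin⟩ := hN
  have h1 := Group.IsSolvable.commutator_lt_of_ne_bot hb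
  have h2 : ⁅N, N⁆ = ⊥ := by
    by_contra h
    exact h1.ne (hmin _ inferInstance h1.le h)
  have hc : ∀ a ∈ N, ∀ b ∈ N, a * b = b * a := by
    intro a ha b hb'
    rw [commutator_eq_bot_iff_le_centralizer] at h2
    exact (mem_centralizer_iff.1 (h2 ha) b hb').symm
  obtain ⟨p, hp, hpd⟩ := Nat.exists_prime_and_dvd (n := Nat.card N) (by
    rw [Ne, card_eq_one]; exact hb)
  haveI := Fact.mk hp
  obtain ⟨x, hx⟩ := exists_prime_orderOf_dvd_card' p hpd
  let U : Subgroup G :=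
    { carrier := {a | a ∈ N ∧ a ^ p = 1}
      mul_mem' := by
        rintro a b ⟨ha, ha'⟩ ⟨hb, hb'⟩
        refine ⟨N.mul_mem ha hb, ?_⟩
        rw [(show Commute a b from hc a ha b hb).mul_pow, ha', hb', one_mul]
      one_mem' := ⟨N.one_mem, one_pow p⟩
      inv_mem' := by
        rintro a ⟨ha, ha'⟩
        exact ⟨N.inv_mem ha, by rw [inv_pow, ha', inv_one]⟩ }
  have hU : U = N := by
    refine hmin U ⟨fun a ha g => ⟨hn.conj_mem a ha.1 g, by rw [conj_pow, ha.2]; simp⟩⟩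
      (fun a ha => ha.1) ?_
    intro h
    have h3 : (x : G) ∈ U := ⟨x.2, by rw [← hx, ← Subgroup.orderOf_coe]; exact pow_orderOf_eq_one _⟩
    rw [h, mem_bot] at h3
    rw [← Subgroup.orderOf_coe, h3, orderOf_one] at hx
    exact hp.one_lt.ne hx
  exact ⟨p, hp, hc, fun a ha => (hU ▸ ha : a ∈ U).2⟩

theorem fixed_points {G : Type*} [Group G] [Finite G] {p : ℕ} (hp : p.Prime) {V P : Subgroup G}
    (hV : V.Normal) (hVb : V ≠ ⊥) (hVp : IsPGroup p V) (hP : IsPGroup p P) :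
    V ⊓ centralizer P ≠ ⊥ := by
  haveI := Fact.mk hp
  letI : MulAction P V := MulAction.compHom V ((MulAut.conjNormal (H := V)).comp P.subtype)
  have hs : ∀ (g : P) (v : V), ((g • v : V) : G) = g * v * (g : G)⁻¹ := fun g v => rfl
  haveI : Nontrivial V := (nontrivial_iff_ne_bot V).2 hVb
  obtain ⟨n, hn, hc⟩ := (hVp.nontrivial_iff_card).1 inferInstance
  obtain ⟨b, hb, hb1⟩ := hP.exists_fixed_point_of_prime_dvd_card_of_fixed_point V (a := 1)
    (by rw [hc]; exact dvd_pow_self p hn.ne') (by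
      intro g; apply Subtype.ext; rw [hs]; simp)
  intro h
  have : (b : G) ∈ V ⊓ centralizer P := by
    refine ⟨b.2, mem_centralizer_iff.2 fun g hg => ?_⟩
    have := congrArg (Subtype.val) (hb ⟨g, hg⟩)
    rw [hs] at this
    exact mul_inv_eq_iff_eq_mul.1 this
  rw [h, mem_bot] at this
  exact hb1 (Subtype.ext this.symm)

theorem ss_tower {A : Type*} [Group A] [Finite A] (h : SS A) {p : ℕ} (hp : p.Prime)
    (hl : ∀ q : ℕ, q.Prime → q ∣ Nat.card A → q ≤ p) (P : Sylow p A) :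
    (P : Subgroup A).Normal := by
  haveI := Fact.mk hp
  obtain ⟨n, hn⟩ : ∃ n, Nat.card A = n := ⟨_, rfl⟩
  induction n using Nat.strong_induction_on generalizing A with
  | _ n ih =>
  by_cases hG : (⊤ : Subgroup A) = ⊥
  · have : (P : Subgroup A) = ⊥ := le_bot_iff.1 (hG ▸ le_top)
    rw [this]; infer_instance
  obtain ⟨y, -, hq, hy⟩ := ss_prime h (H := ⊤) inferInstance hG
  have hcard : Nat.card A = Nat.card (A ⧸ zpowers y) * orderOf y := by
    rw [card_eq_card_quotient_mul_card_subgroup (zpowers y), Nat.card_zpowers]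
  have hW := ih (Nat.card (A ⧸ zpowers y)) (by
      rw [← hn, hcard]; exact lt_mul_of_one_lt_right Nat.card_pos hq.one_lt)
    (h.surj (QuotientGroup.mk' _) (QuotientGroup.mk'_surjective _))
    (fun q h1 h2 => hl q h1 (hcard ▸ h2.mul_right _))
    (P.mapSurjective (QuotientGroup.mk'_surjective (zpowers y))) rfl
  have hW2 : ((P : Subgroup A) ⊔ zpowers y).Normal := by
    have := hW.comap (QuotientGroup.mk' (zpowers y))
    rwa [Sylow.coe_mapSurjective, comap_map_eq, QuotientGroup.ker_mk'] at this
  have hyn : y ∈ normalizer (P : Subgroup A) := by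
    by_cases hqp : orderOf y = p
    · apply le_normalizer
      have h1 : IsPGroup p (zpowers y) := IsPGroup.of_card (n := 1) (by
        rw [Nat.card_zpowers, hqp, pow_one])
      exact (h1.le_sylow_of_normal P) (mem_zpowers y)
    · have hlt : orderOf y < p := lt_of_le_of_ne (hl _ hq (hcard ▸ dvd_mul_left _ _)) hqp
      have hcomm : ∀ g ∈ (P : Subgroup A), Commute g y := by
        intro g hg
        have h1 : g ^ (orderOf y - 1) ∈ centralizer ({y} : Set A) := by
          rw [mem_centralizer_singleton_iff]
          exact commute_of_prime hq rfl (hy.conj_mem y (mem_zpowers y) g)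
        obtain ⟨k, hk⟩ := P.2 ⟨g, hg⟩
        have hk : g ^ p ^ k = 1 := congrArg Subtype.val hk
        have hco : Nat.Coprime (orderOf y - 1) (p ^ k) := by
          apply Nat.Coprime.pow_right
          rw [Nat.coprime_comm, hp.coprime_iff_not_dvd]
          intro h2
          have := Nat.le_of_dvd (by have := hq.two_le; omega) h2
          omega
        have h3 : g ∈ centralizer ({y} : Set A) := by
          have h5 := Nat.gcd_eq_gcd_ab (orderOf y - 1) (p ^ k)
          rw [hco.gcd_eq_one] at h5
          have : g = (g ^ (orderOf y - 1)) ^ (Nat.gcdA (orderOf y - 1) (p ^ k)) * (g ^ (p ^ k)) ^ (Nat.gcdB (orderOf y - 1) (p ^ k)) := by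
            rw [← zpow_natCast, ← zpow_natCast, ← zpow_mul, ← zpow_mul, ← zpow_add, ← h5]; simp
          rw [this, hk, one_zpow, mul_one]
          exact zpow_mem h1 _
        exact mem_centralizer_singleton_iff.1 h3
      rw [mem_normalizer_iff]
      intro g
      constructor
      · intro hg
        rw [← (hcomm g hg).eq]; simpa using hg
      · intro hg
        have := (hcomm _ hg).eq
        have h3 : y * g * y⁻¹ = g := by
          have h4 : y * g * y⁻¹ * y = y * (y * g * y⁻¹) := this
          have h5 : y * g = y * (y * g * y⁻¹) := by rw [← h4]; group
          exact (mul_left_cancel h5).symm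
        rwa [h3] at hg
  have h6 := P.normalizer_sup_eq_top' (N := (P : Subgroup A) ⊔ zpowers y) le_sup_left
  have h7 : normalizer ((P : Subgroup A) : Set A) = ⊤ := by
    refine top_le_iff.1 (h6 ▸ sup_le le_rfl (sup_le le_normalizer ?_))
    rw [zpowers_le]; exact hyn
  exact normalizer_eq_top_iff.1 h7

theorem Dp_map {G H : Type*} [Group G] [Group H] (f : G →* H) (p : ℕ) {d : G} (hd : d ∈ Dp p (⊤ : Subgroup G)) :
    f d ∈ Dp p (⊤ : Subgroup H) := by
  have : Dp p (⊤ : Subgroup G) ≤ (Dp p (⊤ : Subgroup H)).comap f := by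
    unfold Dp
    rw [closure_le]
    rintro x ⟨g, hg, h, hh, hx⟩
    refine subset_closure ⟨f g, trivial, f h, trivial, ?_⟩
    rcases hx with rfl | rfl
    · left; simp
    · right; simp
  exact this hd

theorem ss_pnil {G : Type*} [Group G] [Finite G] (h : SS G) {p : ℕ} (hp : p.Prime) :
    ∃ Q : Subgroup G, Q.Normal ∧ (∀ x ∈ Q, x ^ p = 1 → x = 1) ∧
      ∀ d ∈ Dp p (⊤ : Subgroup G), ∃ k, d ^ (p ^ k) ∈ Q := by
  obtain ⟨n, hn⟩ : ∃ n, Nat.card G = n := ⟨_, rfl⟩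
  induction n using Nat.strong_induction_on generalizing G with
  | _ n ih =>
  by_cases hG : (⊤ : Subgroup G) = ⊥
  · refine ⟨⊥, inferInstance, fun x hx _ => by simpa using hx, fun d _ => ⟨0, ?_⟩⟩
    rw [← hG]; trivial
  obtain ⟨y, -, hq, hy⟩ := ss_prime h (H := ⊤) inferInstance hG
  obtain ⟨Q', hQ'n, hQ'p, hQ'd⟩ := ih (Nat.card (G ⧸ zpowers y)) (by
      rw [← hn, card_eq_card_quotient_mul_card_subgroup (zpowers y), Nat.card_zpowers]
      exact lt_mul_of_one_lt_right Nat.card_pos hq.one_lt)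
    (h.surj (QuotientGroup.mk' _) (QuotientGroup.mk'_surjective _)) rfl
  set f := QuotientGroup.mk' (zpowers y) with hf
  have hker : ∀ x, f x = 1 → x ∈ zpowers y := fun x hx => by
    rw [← QuotientGroup.ker_mk' (zpowers y)]; exact hx
  have hyq : ∀ x ∈ zpowers y, x ^ orderOf y = 1 := by
    rintro x ⟨k, rfl⟩
    show (y ^ k) ^ orderOf y = 1
    rw [← zpow_natCast, ← zpow_mul, mul_comm, zpow_mul, zpow_natCast, pow_orderOf_eq_one, one_zpow]
  by_cases hqp : orderOf y = p
  · let C := centralizer (zpowers y : Set G)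
    have hC : C.Normal := inferInstanceAs (centralizer (zpowers y : Set G)).Normal
    let Q2 := Q'.comap f ⊓ C
    let m := Nat.card Q'
    have hm1 : ∀ x ∈ Q', x ^ m = 1 := fun x hx => by
      have := pow_card_eq_one' (x := (⟨x, hx⟩ : Q'))
      exact congrArg Subtype.val this
    have hmp : Nat.Coprime p m := by
      rw [hp.coprime_iff_not_dvd]
      intro hd
      haveI := Fact.mk hp
      obtain ⟨x, hx⟩ := exists_prime_orderOf_dvd_card' p hd
      have h2 := hQ'p x x.2 (by rw [← hx, ← Subgroup.orderOf_coe]; exact pow_orderOf_eq_one _)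
      rw [← Subgroup.orderOf_coe, h2, orderOf_one] at hx
      exact hp.one_lt.ne hx
    have hmz : ∀ x ∈ Q2, x ^ m ∈ zpowers y := fun x hx => hker _ (by
      rw [map_pow]; exact hm1 _ hx.1)
    have hidx : (center Q2).index ∣ m := by
      let φ : Q2 →* Q' := (f.comp Q2.subtype).codRestrict Q' (fun x => x.2.1)
      have h1 : φ.ker ≤ center Q2 := by
        intro x hx
        have hx2 : (x : G) ∈ zpowers y := hker _ (congrArg Subtype.val hx)
        rw [mem_center_iff]
        intro g
        apply Subtype.ext
        exact (mem_centralizer_iff.1 g.2.2 x hx2).symm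
      have h2 := index_dvd_of_le h1
      rw [index_ker] at h2
      exact h2.trans (card_subgroup_dvd_card _)
    have hmul : ∀ a ∈ Q2, ∀ b ∈ Q2, (a * b) ^ m = a ^ m * b ^ m := by
      intro a ha b hb
      obtain ⟨j, hj⟩ := hidx
      have h1 := map_mul (MonoidHom.transferCenterPow Q2) ⟨a, ha⟩ ⟨b, hb⟩
      have h2 := congrArg (fun x : center Q2 => ((x : Q2) : G)) h1
      simp only [Subgroup.coe_pow, Subgroup.coe_mul, MonoidHom.transferCenterPow_apply] at h2
      have h3 : Commute (a ^ (center Q2).index) (b ^ (center Q2).index) := by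
        have h4 := mem_center_iff.1 (MonoidHom.transferCenterPow Q2 ⟨b, hb⟩).2
          (⟨a, ha⟩ ^ (center Q2).index)
        have h5 := congrArg (fun x : Q2 => (x : G)) h4
        simp only [Subgroup.coe_pow, Subgroup.coe_mul, MonoidHom.transferCenterPow_apply] at h5
        exact h5
      rw [hj, pow_mul, pow_mul, pow_mul, h2, h3.mul_pow]
    let Q : Subgroup G :=
      { carrier := {a | a ∈ Q2 ∧ a ^ m = 1}
        mul_mem' := by
          rintro a b ⟨ha, ha'⟩ ⟨hb, hb'⟩
          exact ⟨Q2.mul_mem ha hb, by rw [hmul a ha b hb, ha', hb', one_mul]⟩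
        one_mem' := ⟨Q2.one_mem, one_pow m⟩
        inv_mem' := by
          rintro a ⟨ha, ha'⟩
          exact ⟨Q2.inv_mem ha, by rw [inv_pow, ha', inv_one]⟩ }
    have hQ2n : Q2.Normal := inferInstance
    refine ⟨Q, ⟨fun a ha g => ⟨hQ2n.conj_mem a ha.1 g, by rw [conj_pow, ha.2]; simp⟩⟩,
      fun x hx h1 => eq_one_of_pow_coprime hmp h1 hx.2, fun d hd => ?_⟩
    obtain ⟨k, hk⟩ := hQ'd (f d) (Dp_map f p hd)
    have hdC : d ∈ C := by
      have : Dp p ⊤ ≤ C := by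
        unfold Dp
        rw [closure_le]
        rintro x ⟨g, hg, h, hh, hx⟩
        show x ∈ centralizer (zpowers y : Set G)
        rw [mem_centralizer_iff]
        rintro z ⟨k, rfl⟩
        rcases hx with rfl | rfl
        · exact ((commutator_commute hy g h).zpow_right k).eq.symm
        · exact ((commute_of_prime hp hqp (hy.conj_mem y (mem_zpowers y) g)).zpow_right k).eq.symm
      exact this hd
    have hdQ : d ^ p ^ k ∈ Q2 := mem_inf.2 ⟨mem_comap.2 (by rw [map_pow]; exact hk), pow_mem hdC _⟩
    refine ⟨k + 1, ?_⟩
    rw [pow_succ, pow_mul]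
    refine ⟨pow_mem hdQ _, ?_⟩
    rw [← pow_mul, mul_comm, pow_mul]
    have := hyq _ (hmz _ hdQ)
    rwa [hqp] at this
  · refine ⟨Q'.comap f, inferInstance, fun x hx h1 => ?_, fun d hd => ?_⟩
    · have h2 := hQ'p (f x) hx (by rw [← map_pow, h1, map_one])
      exact eq_one_of_pow_coprime ((Nat.coprime_primes hq hp).2 hqp) (hyq x (hker x h2)) h1
    · obtain ⟨k, hk⟩ := hQ'd (f d) (Dp_map f p hd)
      exact ⟨k, by rw [mem_comap, map_pow]; exact hk⟩


theorem eigen_aux0 {W : Type*} [AddCommGroup W] [Finite W] [Nontrivial W] {p : ℕ} [Fact p.Prime]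
    [Module (ZMod p) W] (f : W →+ W) (hf : ∀ w, f^[p] w = f w) :
    ∃ (k : ℕ) (w : W), w ≠ 0 ∧ f w = k • w := by
  have hp : p.Prime := Fact.out
  let F : Module.End (ZMod p) W := f.toZModLinearMap p
  have hF : ∀ w : W, (F : W →ₗ[ZMod p] W) w = f w := fun w => rfl
  have hF2 : Polynomial.aeval F (Polynomial.X ^ p - Polynomial.X : Polynomial (ZMod p)) = 0 := by
    rw [map_sub, map_pow, Polynomial.aeval_X, sub_eq_zero]
    ext w
    rw [Module.End.pow_apply]
    exact hf w
  have hs := (FiniteField.splits_X_pow_card_sub_X p (K := ZMod p)) 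
  have hne := FiniteField.X_pow_card_sub_X_ne_zero (ZMod p) hp.one_lt
  have hd := minpoly.dvd (ZMod p) F hF2
  have hint : IsIntegral (ZMod p) F := by
    haveI : Module.Finite (ZMod p) W := Module.Finite.of_finite
    exact Algebra.IsIntegral.isIntegral F
  have hs2 : (minpoly (ZMod p) F).Splits := by
    refine Polynomial.Splits.of_dvd ?_ hne hd
    simpa using hs
  obtain ⟨a, ha⟩ := hs2.exists_eval_eq_zero (minpoly.degree_pos hint).ne'
  obtain ⟨v, hv⟩ := (Module.End.hasEigenvalue_of_isRoot (f := F) ha).exists_hasEigenvector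
  refine ⟨a.val, v, hv.2, ?_⟩
  have h1 := hv.apply_eq_smul
  rw [hF] at h1
  rw [h1, ← Nat.cast_smul_eq_nsmul (ZMod p), ZMod.natCast_zmod_val]

theorem eigen_aux {W : Type*} [AddCommGroup W] [Finite W] [Nontrivial W] {p : ℕ} (hp : p.Prime)
    (h : ∀ w : W, p • w = 0) (f : W →+ W) (hf : ∀ w, f^[p] w = f w) :
    ∃ (k : ℕ) (w : W), w ≠ 0 ∧ f w = k • w := by
  haveI := Fact.mk hp
  letI : Module (ZMod p) W := AddCommGroup.zmodModule h
  exact eigen_aux0 (p := p) f hf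

theorem eigen_vec {G : Type*} [Group G] [Finite G] {p : ℕ} (hp : p.Prime) {V : Subgroup G}
    (hV : V.Normal) (hb : V ≠ ⊥) (hc : ∀ a ∈ V, ∀ b ∈ V, a * b = b * a)
    (hpow : ∀ a ∈ V, a ^ p = 1) (g : G) (hg : ∀ v ∈ V, Commute (g ^ (p - 1)) v) :
    ∃ (k : ℕ), ∃ v ∈ V, v ≠ 1 ∧ g * v * g⁻¹ = v ^ k := by
  letI : CommGroup V := { (inferInstance : Group V) with
    mul_comm := fun a b => Subtype.ext (hc a a.2 b b.2) }
  haveI : Nontrivial V := (nontrivial_iff_ne_bot V).2 hb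
  let f : V →* V := (MulAut.conjNormal (H := V) g).toMonoidHom
  have hf : ∀ v : V, ((f v : V) : G) = g * v * g⁻¹ := fun v => rfl
  have hit : ∀ (n : ℕ) (v : V), ((f^[n] v : V) : G) = g ^ n * v * (g ^ n)⁻¹ := by
    intro n
    induction n with
    | zero => intro v; simp
    | succ n ih => intro v; rw [Function.iterate_succ_apply, ih, hf, pow_succ]; group
  obtain ⟨k, w, hw, hk⟩ := eigen_aux (W := Additive V) hp (fun w => by
      apply Additive.toMul.injective
      rw [toMul_nsmul]
      exact Subtype.ext (hpow _ w.toMul.2)) (MonoidHom.toAdditive f) (fun w => by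
      apply Additive.toMul.injective
      apply Subtype.ext
      have h1 : ((f^[p] w.toMul : V) : G) = f w.toMul := by
        rw [hit, hf]
        have : g ^ p = g * g ^ (p - 1) := by rw [← pow_succ', Nat.sub_add_cancel hp.pos]
        rw [this, mul_assoc g, (hg _ w.toMul.2).eq]; group
      exact h1)
  refine ⟨k, w.toMul, w.toMul.2, fun h => hw ?_, ?_⟩
  · apply Additive.toMul.injective; exact Subtype.ext h
  · rw [← hf]
    have := congrArg (fun x : Additive V => ((x.toMul : V) : G)) hk
    exact this

theorem eigen {G : Type*} [Group G] [Finite G] {p : ℕ} (hp : p.Prime) {V : Subgroup G}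
    (hV : IsMinimalNormal V) (hc : ∀ a ∈ V, ∀ b ∈ V, a * b = b * a)
    (hpow : ∀ a ∈ V, a ^ p = 1) (hD : V ≤ centralizer (Dp p (⊤ : Subgroup G))) :
    ∃ y, V = zpowers y := by
  obtain ⟨hn, hb, hmin⟩ := hV
  have hcen : ∀ d ∈ Dp p (⊤ : Subgroup G), ∀ v ∈ V, Commute d v := fun d hd v hv =>
    mem_centralizer_iff.1 (hD hv) d hd
  have key : ∀ g : G, ∃ k : ℕ, ∀ v ∈ V, g * v * g⁻¹ = v ^ k := by
    intro g
    obtain ⟨k, v, hv, hv1, hk⟩ := eigen_vec hp hn hb hc hpow g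
      (hcen _ (subset_closure ⟨g, trivial, g, trivial, Or.inr rfl⟩))
    let U : Subgroup G :=
      { carrier := {a | a ∈ V ∧ g * a * g⁻¹ = a ^ k}
        mul_mem' := by
          rintro a b ⟨ha, ha'⟩ ⟨hb, hb'⟩
          refine ⟨V.mul_mem ha hb, ?_⟩
          rw [(show Commute a b from hc a ha b hb).mul_pow, ← ha', ← hb']; group
        one_mem' := ⟨V.one_mem, by simp⟩
        inv_mem' := by
          rintro a ⟨ha, ha'⟩
          exact ⟨V.inv_mem ha, by rw [inv_pow, ← ha']; group⟩ }
    have hU : U = V := by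
      refine hmin U ⟨fun a ha h => ⟨hn.conj_mem a ha.1 h, ?_⟩⟩ (fun a ha => ha.1) ?_
      · rw [conj_pow, ← ha.2]
        have h1 := hcen (h⁻¹ * g * (h⁻¹)⁻¹ * g⁻¹)
          (subset_closure ⟨h⁻¹, trivial, g, trivial, Or.inl rfl⟩) _ (hn.conj_mem a ha.1 g)
        have h2 := h1.eq
        calc g * (h * a * h⁻¹) * g⁻¹
            = h * ((h⁻¹ * g * h⁻¹⁻¹ * g⁻¹) * (g * a * g⁻¹)) * (h⁻¹ * g * h⁻¹⁻¹ * g⁻¹)⁻¹ * h⁻¹ := by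
              group
          _ = h * (g * a * g⁻¹) * h⁻¹ := by rw [h2]; group
      · intro h
        have : v ∈ U := ⟨hv, hk⟩
        rw [h, mem_bot] at this
        exact hv1 this
    exact ⟨k, fun v hv => (hU ▸ hv : v ∈ U).2⟩
  obtain ⟨v, hv, hv1⟩ := (V.bot_or_exists_ne_one).resolve_left hb
  refine ⟨v, (hmin _ ⟨?_⟩ (by rwa [zpowers_le]) (by rwa [Ne, zpowers_eq_bot])).symm⟩
  rintro x ⟨j, rfl⟩ g
  obtain ⟨k, hk⟩ := key g
  show g * v ^ j * g⁻¹ ∈ _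
  rw [hk _ (zpow_mem hv j)]
  exact pow_mem (zpow_mem (mem_zpowers v) j) k


theorem ssq_map {G H : Type*} [Group G] [Group H] (f : G →* H) (hf : Function.Surjective f)
    {K : Subgroup G} (h : SSq K) : SSq (K.map f) := by
  intro N hN hK ht
  obtain ⟨x, hx, hxn⟩ := h (N.comap f) inferInstance (map_le_iff_le_comap.1 hK) (by
    intro h1
    apply ht
    rw [← map_comap_eq_self_of_surjective hf N, h1, ← MonoidHom.range_eq_map,
      MonoidHom.range_eq_top_of_surjective f hf])
  refine ⟨f x, hx, ?_⟩
  have := hxn.map f hf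
  rwa [Subgroup.map_sup, map_comap_eq_self_of_surjective hf, MonoidHom.map_zpowers] at this

theorem ssq_of_map {G H : Type*} [Group G] [Group H] (f : G →* H) (hf : Function.Surjective f)
    {K : Subgroup G} (hk : f.ker ≤ K) (h : SSq (K.map f)) : SSq K := by
  intro N hN hK ht
  have hkN := hk.trans hK
  obtain ⟨x, hx, hxn⟩ := h (N.map f) (hN.map f hf) (map_mono hK) (by
    intro h1
    apply ht
    rw [← sup_eq_left.2 hkN, ← comap_map_eq, h1, comap_top])
  obtain ⟨x, rfl⟩ := hf x
  refine ⟨x, fun h1 => hx (mem_map_of_mem f h1), ?_⟩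
  have := hxn.comap f
  rwa [← MonoidHom.map_zpowers, ← Subgroup.map_sup, comap_map_eq,
    sup_eq_left.2 (hkN.trans le_sup_left)] at this

theorem sylow_sup {G : Type*} [Group G] [Finite G] {q : ℕ} [hq : Fact q.Prime] {K T : Subgroup G}
    (hK : K.Normal) (hT : ∀ t ∈ T, ∃ k : ℕ, t ^ (q ^ k) ∈ K) (P : Sylow q T) :
    T ≤ K ⊔ (P : Subgroup T).map T.subtype := by
  have h1 : IsPGroup q (T ⧸ K.subgroupOf T) := by
    intro x
    obtain ⟨t, rfl⟩ := QuotientGroup.mk_surjective x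
    obtain ⟨k, hk⟩ := hT t t.2
    refine ⟨k, ?_⟩
    rw [← QuotientGroup.mk_pow, QuotientGroup.eq_one_iff]
    exact hk
  obtain ⟨n, hn⟩ := IsPGroup.iff_card.1 h1
  have h2 : (K.subgroupOf T ⊔ P).index ∣ q ^ n := by
    rw [← hn]; exact index_dvd_of_le le_sup_left
  have h3 : (K.subgroupOf T ⊔ P).index ∣ (P : Subgroup T).index := index_dvd_of_le le_sup_right
  have h4 : (K.subgroupOf T ⊔ P).index = 1 := by
    obtain ⟨j, -, hj⟩ := (Nat.dvd_prime_pow hq.out).1 h2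
    rcases j with _ | j
    · simpa using hj
    · exfalso
      apply P.not_dvd_index
      refine dvd_trans ?_ h3
      rw [hj]; exact dvd_pow_self q (Nat.succ_ne_zero j)
  rw [index_eq_one] at h4
  have h5 := congrArg (Subgroup.map T.subtype) h4
  rw [Subgroup.map_sup, ← MonoidHom.range_eq_map, range_subtype, subgroupOf_map_subtype] at h5
  exact h5.ge.trans (sup_le_sup_right inf_le_left _)

theorem frat_sylow {G : Type*} [Group G] [Finite G] {q : ℕ} [hq : Fact q.Prime] {K T : Subgroup G}
    (hK : K.Normal) (hTn : T.Normal) (hKΦ : K ≤ frattini G)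
    (hT : ∀ t ∈ T, ∃ k : ℕ, t ^ (q ^ k) ∈ K) (P : Sylow q T) :
    ((P : Subgroup T).map T.subtype).Normal := by
  have h1 := sylow_sup hK hT P
  have h2 := P.normalizer_sup_eq_top
  apply normalizer_eq_top_iff.1
  apply frattini_nongenerating
  refine top_le_iff.1 (h2 ▸ sup_le le_sup_left (h1.trans (sup_le (hKΦ.trans le_sup_right) ?_)))
  exact le_normalizer.trans le_sup_left

theorem frat_sylow' {G : Type*} [Group G] [Finite G] {q : ℕ} (hq : q.Prime) {K T : Subgroup G}
    (hK : K.Normal) (hTn : T.Normal) (hKΦ : K ≤ frattini G)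
    (hT : ∀ t ∈ T, ∃ k : ℕ, t ^ (q ^ k) ∈ K) :
    ∃ Q : Subgroup G, Q.Normal ∧ IsPGroup q Q ∧ Q ≤ T ∧ T ≤ K ⊔ Q := by
  haveI := Fact.mk hq
  obtain ⟨P⟩ : Nonempty (Sylow q T) := inferInstance
  exact ⟨_, frat_sylow hK hTn hKΦ hT P, P.2.map _, map_subtype_le _, sylow_sup hK hT P⟩

theorem inf_eq_bot_of_pq {G : Type*} [Group G] {p q : ℕ} (hp : p.Prime) (hq : q.Prime)
    (hpq : p ≠ q) {N Q : Subgroup G} (hN : ∀ a ∈ N, a ^ p = 1) (hQ : IsPGroup q Q) :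
    N ⊓ Q = ⊥ := by
  rw [eq_bot_iff]
  rintro x ⟨hx, hxQ⟩
  obtain ⟨k, hk⟩ := hQ ⟨x, hxQ⟩
  have hk : x ^ q ^ k = 1 := congrArg Subtype.val hk
  exact eq_one_of_pow_coprime (((Nat.coprime_primes hp hq).2 hpq).pow_right k) (hN x hx) hk

theorem saturation {G : Type*} [Group G] [Finite G] {N : Subgroup G} (hN : N.Normal)
    (hΦ : N ≤ frattini G) (hs : SSq N) : SS G := by
  obtain ⟨n, hn⟩ : ∃ n, Nat.card G = n := ⟨_, rfl⟩
  induction n using Nat.strong_induction_on generalizing G with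
  | _ n ih =>
  have IH : ∀ Q : Subgroup G, Q.Normal → Q ≠ ⊥ → ∀ N : Subgroup G, N.Normal → N ≤ frattini G →
      SSq N → SSq Q := by
    intro Q hQ hQb N hN hΦ hs
    rw [← ss_quot_iff]
    have hsur := QuotientGroup.mk'_surjective Q
    refine ih (Nat.card (G ⧸ Q)) ?_ (hN.map _ hsur)
      (map_le_iff_le_comap.2 (hΦ.trans (frattini_le_comap_frattini_of_surjective hsur)))
      (ssq_map _ hsur hs) rfl
    rw [← hn, card_eq_card_quotient_mul_card_subgroup Q]
    exact lt_mul_of_one_lt_right Nat.card_pos (Subgroup.one_lt_card_iff_ne_bot Q |>.2 hQb)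
  by_cases hb : N = ⊥
  · rw [hb] at hs; exact hs
  obtain ⟨V, hV, hVN⟩ := exists_minimalNormal hN hb
  have hVs := IH V hV.1 hV.2.1 N hN hΦ hs
  have hVΦ := hVN.trans hΦ
  clear hs hΦ hVN hb hN
  haveI := hV.1
  have hsur := QuotientGroup.mk'_surjective V
  have hQs : SS (G ⧸ V) := (ss_quot_iff V).2 hVs
  haveI : Group.IsSolvable G := by
    haveI := hQs.solvable
    haveI : Group.IsNilpotent (frattini G) := frattini_nilpotent
    refine Group.isSolvable_of_ker_le_range (frattini G).subtype (QuotientGroup.mk' V) ?_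
    rw [QuotientGroup.ker_mk', range_subtype]; exact hVΦ
  obtain ⟨p, hp, hc, hpow⟩ := minNormal_elem hV
  obtain ⟨Q', hQ'n, hQ'p, hQ'd⟩ := ss_pnil hQs hp
  by_cases hQ'b : Q' = ⊥
  · have hDp : IsPGroup p (Dp p (⊤ : Subgroup G)) := by
      rintro ⟨d, hd⟩
      obtain ⟨k, hk⟩ := hQ'd _ (Dp_map (QuotientGroup.mk' V) p hd)
      rw [hQ'b, mem_bot, ← map_pow] at hk
      have hk2 : d ^ p ^ k ∈ V := by rw [← QuotientGroup.ker_mk' V]; exact hk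
      refine ⟨k + 1, Subtype.ext ?_⟩
      show d ^ p ^ (k + 1) = 1
      rw [pow_succ, pow_mul]; exact hpow _ hk2
    have hVp : IsPGroup p V := fun v => ⟨1, Subtype.ext (by
      show (v : G) ^ p ^ 1 = 1
      rw [pow_one]; exact hpow _ v.2)⟩
    have h1 := fixed_points hp hV.1 hV.2.1 hVp hDp
    haveI := Dp_normal p (⊤ : Subgroup G) inferInstance
    have h2 : V ⊓ centralizer (Dp p (⊤ : Subgroup G)) = V := hV.2.2 _ inferInstance inf_le_left h1
    obtain ⟨y, hy⟩ := eigen hp hV hc hpow (inf_eq_left.1 h2)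
    rw [hy] at hVs
    have h3 : ⊥ ⊔ zpowers y = V := by rw [bot_sup_eq, hy]
    exact ssq_of_zpowers inferInstance (h3 ▸ hV.1) (by rw [bot_sup_eq]; exact hVs)
  · obtain ⟨y, hyQ, hq, hy⟩ := ss_prime hQs hQ'n hQ'b
    obtain ⟨Q, hQn, hQp, -, hTQ⟩ := frat_sylow' hq hV.1 (hy.comap (QuotientGroup.mk' V)) hVΦ (by
      intro t ht
      refine ⟨1, ?_⟩
      have hkv : ∀ x, QuotientGroup.mk' V x = 1 → x ∈ V := fun x hx =>
        (QuotientGroup.eq_one_iff x).1 hx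
      apply hkv
      rw [map_pow, pow_one]
      obtain ⟨k, hk⟩ := mem_comap.1 ht
      rw [← hk]
      show (y ^ k) ^ orderOf y = 1
      rw [← zpow_natCast, ← zpow_mul, mul_comm, zpow_mul, zpow_natCast, pow_orderOf_eq_one, one_zpow])
    have hqp : p ≠ orderOf y := by
      intro h
      have := hQ'p y hyQ (by rw [h]; exact pow_orderOf_eq_one y)
      rw [this, orderOf_one] at hq
      exact Nat.not_prime_one hq
    have hQb : Q ≠ ⊥ := by
      rintro rfl
      rw [sup_bot_eq] at hTQ
      obtain ⟨z, hz⟩ := hsur y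
      have h1 : z ∈ V := hTQ (by rw [mem_comap, hz]; exact mem_zpowers y)
      rw [← QuotientGroup.ker_mk' V, MonoidHom.mem_ker, hz] at h1
      rw [h1, orderOf_one] at hq
      exact Nat.not_prime_one hq
    have h2 := IH Q hQn hQb V hV.1 hVΦ hVs
    have h3 := hVs.inf hV.1 hQn h2
    rwa [inf_eq_bot_of_pq hp hq hqp hpow hQp] at h3

/-- if every coatom contains a normal subgroup with supersoluble quotient -/
theorem ss_of_coatoms {G : Type*} [Group G] [Finite G]
    (h : ∀ T : Subgroup G, IsCoatom T → T.Normal ∨ ∃ K ≤ T, K.Normal ∧ SSq K) : SS G := by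
  obtain ⟨R, hRn, hR, hmin⟩ := exists_residual G
  refine saturation hRn ?_ hR
  unfold frattini Order.radical
  refine le_iInf₂ fun T hT => ?_
  rcases h T hT with hn | ⟨K, hK, hKn, hKs⟩
  · refine hmin T hn ?_
    intro N hN hTN ht
    have : N = T := by
      rcases eq_or_lt_of_le hTN with h | h
      · exact h.symm
      · exact absurd (hT.2 _ h) ht
    subst this
    obtain ⟨x, hx⟩ : ∃ x, x ∉ N := by
      by_contra! h
      exact ht (top_le_iff.1 fun x _ => h x)
    refine ⟨x, hx, ?_⟩
    have : N ⊔ zpowers x = ⊤ := hT.2 _ (lt_of_le_of_ne le_sup_left (fun h => hx (by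
      rw [h]; exact mem_sup_right (mem_zpowers x))))
    rw [this]; infer_instance
  · exact (hmin K hKn hKs).trans hK


def PP (M : Type*) [Group M] : Prop :=
  (∀ L : Subgroup M, L ≠ ⊤ → SS L) ∧ ∀ L T : Subgroup M, IsCoatom L → T ⋖ L →
    ∃ X : Subgroup M, X ≠ ⊤ ∧ T ≤ X ∧ (X.Normal ∨ ∃ K ≤ X, K.Normal ∧ SSq K)

theorem map_ne_top {G H : Type*} [Group G] [Group H] {f : G →* H}
    {X : Subgroup G} (hk : f.ker ≤ X) (hX : X ≠ ⊤) : X.map f ≠ ⊤ := by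
  intro h
  apply hX
  rw [← sup_eq_left.2 hk, ← comap_map_eq, h, comap_top]

theorem comap_covBy {G H : Type*} [Group G] [Group H] {f : G →* H} (hf : Function.Surjective f)
    {T L : Subgroup H} (h : T ⋖ L) : T.comap f ⋖ L.comap f := by
  refine ⟨(comap_lt_comap_of_surjective hf).2 h.1, fun Z h1 h2 => ?_⟩
  have hk : f.ker ≤ Z := (ker_le_comap f T).trans h1.le
  have hZ : (Z.map f).comap f = Z := by rw [comap_map_eq, sup_eq_left.2 hk]
  rw [← hZ] at h1 h2
  exact h.2 ((comap_lt_comap_of_surjective hf).1 h1) ((comap_lt_comap_of_surjective hf).1 h2)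

theorem PP.surj {G H : Type*} [Group G] [Group H] [Finite G] (h : PP G) (f : G →* H)
    (hf : Function.Surjective f) : PP H := by
  refine ⟨fun L hL => ?_, fun L T hL hT => ?_⟩
  · have h1 := h.1 (L.comap f) (by
      intro h1; apply hL
      rw [← map_comap_eq_self_of_surjective hf L, h1, ← MonoidHom.range_eq_map,
        MonoidHom.range_eq_top_of_surjective f hf])
    exact h1.surj (f.subgroupComap L) (f.subgroupComap_surjective_of_surjective L hf)
  · obtain ⟨X, hX, hTX, h1⟩ := h.2 (L.comap f) (T.comap f) (isCoatom_comap_of_surjective hf hL)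
      (comap_covBy hf hT)
    refine ⟨X.map f, map_ne_top ((ker_le_comap f T).trans hTX) hX, ?_, ?_⟩
    · rw [← map_comap_eq_self_of_surjective hf T]; exact map_mono hTX
    · rcases h1 with h1 | ⟨K, hK, hKn, hKs⟩
      · exact Or.inl (h1.map f hf)
      · exact Or.inr ⟨K.map f, map_mono hK, hKn.map f hf, ssq_map f hf hKs⟩

theorem PP.solvable {G : Type*} [Group G] [Finite G] (h : PP G) : Group.IsSolvable G := by
  obtain ⟨n, hn⟩ : ∃ n, Nat.card G = n := ⟨_, rfl⟩
  induction n using Nat.strong_induction_on generalizing G with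
  | _ n ih =>
  by_cases hss : SS G
  · exact hss.solvable
  by_cases hN : ∃ N : Subgroup G, N.Normal ∧ N ≠ ⊥ ∧ N ≠ ⊤
  · obtain ⟨N, hNn, hb, ht⟩ := hN
    haveI := (h.1 N ht).solvable
    haveI := ih (Nat.card (G ⧸ N)) (by
      rw [← hn, card_eq_card_quotient_mul_card_subgroup N]
      exact lt_mul_of_one_lt_right Nat.card_pos (Subgroup.one_lt_card_iff_ne_bot N |>.2 hb))
      (h.surj (QuotientGroup.mk' N) (QuotientGroup.mk'_surjective N)) rfl
    refine Group.isSolvable_of_ker_le_range N.subtype (QuotientGroup.mk' N) ?_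
    rw [QuotientGroup.ker_mk', range_subtype]
  · push Not at hN
    have h1 : ∀ L Z : Subgroup G, IsCoatom L → Z < L → Z = ⊥ := by
      intro L Z hL hZ
      obtain ⟨T, hZT, hT⟩ := exists_le_covBy_of_lt hZ
      obtain ⟨X, hX, hTX, h2⟩ := h.2 L T hL hT
      rcases h2 with h2 | ⟨K, hK, hKn, hKs⟩
      · have : X = ⊥ := by by_contra h3; exact hX (hN X h2 h3)
        exact le_bot_iff.1 (this ▸ hZT.trans hTX)
      · have : K = ⊥ := by
          by_contra h3
          exact hX (top_le_iff.1 ((hN K hKn h3) ▸ hK))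
        rw [this] at hKs
        exact absurd hKs hss
    by_cases hpg : ∃ p : ℕ, p.Prime ∧ IsPGroup p G
    · obtain ⟨p, hp, hpg⟩ := hpg
      haveI := Fact.mk hp
      haveI := hpg.isNilpotent
      infer_instance
    haveI : IsZGroup G := by
      refine ⟨fun p hp P => ?_⟩
      by_cases hb : (P : Subgroup G) = ⊥
      · have h4 : IsCyclic ((P : Subgroup G) : Subgroup G) := by rw [hb]; infer_instance
        exact h4
      have hPt : (P : Subgroup G) ≠ ⊤ := by
        intro h2
        apply hpg
        refine ⟨p, hp, ?_⟩
        have h3 := P.2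
        rw [h2] at h3
        exact h3.of_equiv topEquiv
      obtain ⟨L, hL, hPL⟩ := (eq_top_or_exists_le_coatom (P : Subgroup G)).resolve_left hPt
      obtain ⟨x, hx, hx1⟩ := ((P : Subgroup G).bot_or_exists_ne_one).resolve_left hb
      have hxP : zpowers x ≤ P := by rw [zpowers_le]; exact hx
      have h2 : zpowers x = L := by
        rcases eq_or_lt_of_le (hxP.trans hPL) with h3 | h3
        · exact h3
        · exact absurd (zpowers_eq_bot.1 (h1 L _ hL h3)) hx1
      have h3 : (P : Subgroup G) = zpowers x := le_antisymm (hPL.trans h2.ge) hxP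
      have h4 : IsCyclic ((P : Subgroup G) : Subgroup G) := by rw [h3]; infer_instance
      exact h4
    infer_instance

theorem exists_normal_coatom {G : Type*} [Group G] [Finite G] [Group.IsSolvable G]
    {N : Subgroup G} (hN : N.Normal) (ht : N ≠ ⊤) :
    ∃ S : Subgroup G, IsCoatom S ∧ S.Normal ∧ N ≤ S ∧ commutator G ≤ S ∧ SSq S ∧
      S.index.Prime := by
  have h1 : commutator G ⊔ N ≠ ⊤ := by
    intro h
    haveI : Nontrivial (G ⧸ N) := QuotientGroup.nontrivial_iff.2 ht
    apply (Group.IsSolvable.commutator_lt_top_of_nontrivial (G ⧸ N)).ne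
    have hs := QuotientGroup.mk'_surjective N
    have h2 : (commutator G ⊔ N).map (QuotientGroup.mk' N) = commutator (G ⧸ N) := by
      rw [Subgroup.map_sup, (Subgroup.map_eq_bot_iff (f := QuotientGroup.mk' N) N).2 (by rw [QuotientGroup.ker_mk']), sup_bot_eq,
        commutator_def, map_commutator, ← MonoidHom.range_eq_map,
        MonoidHom.range_eq_top_of_surjective _ hs, commutator_def]
    rw [← h2, h, ← MonoidHom.range_eq_map, MonoidHom.range_eq_top_of_surjective _ hs]
  obtain ⟨S, hS, hle⟩ := (eq_top_or_exists_le_coatom _).resolve_left h1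
  have hc := le_sup_left.trans hle
  have hSn : S.Normal := Normal.of_commutator_le G hc
  refine ⟨S, hS, hSn, le_sup_right.trans hle, hc, ssq_of_comm hc, ?_⟩
  letI : CommGroup (G ⧸ S) := { (inferInstance : Group (G ⧸ S)) with
    mul_comm := by
      intro a b
      obtain ⟨a, rfl⟩ := QuotientGroup.mk_surjective a
      obtain ⟨b, rfl⟩ := QuotientGroup.mk_surjective b
      rw [← QuotientGroup.mk_mul, ← QuotientGroup.mk_mul, QuotientGroup.eq]
      apply hc
      have h6 : (a * b)⁻¹ * (b * a) = b⁻¹ * a⁻¹ * (b⁻¹)⁻¹ * (a⁻¹)⁻¹ := by group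
      rw [h6]
      exact commutator_mem_commutator (mem_top _) (mem_top _) }
  haveI : IsSimpleGroup (G ⧸ S) := by
    haveI : Nontrivial (G ⧸ S) := QuotientGroup.nontrivial_iff.2 hS.1
    refine ⟨fun H _ => ?_⟩
    have hs := QuotientGroup.mk'_surjective S
    by_cases h3 : S = H.comap (QuotientGroup.mk' S)
    · left
      rw [← map_comap_eq_self_of_surjective hs H, ← h3, Subgroup.map_eq_bot_iff, QuotientGroup.ker_mk']
    · right
      have h4 := hS.2 _ (lt_of_le_of_ne (by
        conv_lhs => rw [← QuotientGroup.ker_mk' S]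
        exact ker_le_comap _ _) h3)
      rw [← map_comap_eq_self_of_surjective hs H, h4, ← MonoidHom.range_eq_map,
        MonoidHom.range_eq_top_of_surjective _ hs]
  rw [index_eq_card]
  exact IsSimpleGroup.prime_card

theorem PP.sup_ne_top {G : Type*} [Group G] [Finite G] (h : PP G) {R : Subgroup G}
    (hR : ∀ J : Subgroup G, J.Normal → SSq J → R ≤ J) {L T : Subgroup G} (hL : IsCoatom L)
    (hT : T ⋖ L) : T ⊔ R ≠ ⊤ := by
  haveI := h.solvable
  obtain ⟨X, hX, hTX, h2⟩ := h.2 L T hL hT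
  intro ht
  rcases h2 with h2 | ⟨K, hK, hKn, hKs⟩
  · obtain ⟨S, hS, hSn, hXS, -, hSs, -⟩ := exists_normal_coatom h2 hX
    exact hS.1 (top_le_iff.1 (ht ▸ sup_le (hTX.trans hXS) (hR S hSn hSs)))
  · exact hX (top_le_iff.1 (ht ▸ sup_le hTX ((hR K hKn hKs).trans hK)))


theorem mem_of_pow_coprime {G : Type*} [Group G] {H : Subgroup G} {x : G} {m n : ℕ}
    (h : Nat.Coprime m n) (h1 : x ^ m ∈ H) (h2 : x ^ n ∈ H) : x ∈ H := by
  have h5 := Nat.gcd_eq_gcd_ab m n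
  rw [h.gcd_eq_one] at h5
  have : x = (x ^ m) ^ (Nat.gcdA m n) * (x ^ n) ^ (Nat.gcdB m n) := by
    rw [← zpow_natCast, ← zpow_natCast, ← zpow_mul, ← zpow_mul, ← zpow_add, ← h5]; simp
  rw [this]
  exact H.mul_mem (zpow_mem h1 _) (zpow_mem h2 _)

theorem isPGroup_zpowers {G : Type*} [Group G] {p k : ℕ} {x : G} (hx : x ^ p ^ k = 1) :
    IsPGroup p (zpowers x) := by
  rintro ⟨z, j, rfl⟩
  refine ⟨k, Subtype.ext ?_⟩
  show (x ^ j) ^ p ^ k = 1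
  rw [← zpow_natCast, ← zpow_mul, mul_comm, zpow_mul, zpow_natCast, hx, one_zpow]

theorem no_p_elements {L : Type*} [Group L] [Finite L] {p : ℕ} (hp : p.Prime)
    (h : ∀ x : L, ∀ k : ℕ, x ^ p ^ k = 1 → x ∈ frattini L) (x : L) (k : ℕ) (hx : x ^ p ^ k = 1) :
    x = 1 := by
  haveI := Fact.mk hp
  obtain ⟨P, hP⟩ := (isPGroup_zpowers hx).exists_le_sylow
  have hPF : (P : Subgroup L) ≤ frattini L := by
    intro z hz
    obtain ⟨k, hk⟩ := P.2 ⟨z, hz⟩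
    exact h z k (congrArg Subtype.val hk)
  have h1 := P.normalizer_sup_eq_top' hPF
  have h2 : normalizer ((P : Subgroup L) : Set L) = ⊤ := frattini_nongenerating h1
  haveI hPn : (P : Subgroup L).Normal := normalizer_eq_top_iff.1 h2
  obtain ⟨H, hH⟩ := exists_right_complement'_of_coprime P.card_coprime_index
  have h3 : H = ⊤ := by
    apply frattini_nongenerating
    refine top_le_iff.1 (hH.sup_eq_top ▸ sup_le (hPF.trans le_sup_right) le_sup_left)
  have h4 := hH.disjoint
  rw [h3, disjoint_top] at h4
  have h5 := hP (mem_zpowers x)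
  rw [h4] at h5
  exact h5

theorem p_centralize {X : Type*} [Group X] [Finite X] [Group.IsSolvable X] {V : Subgroup X}
    (hV : IsMinimalNormal V) (hVt : V ≠ ⊤) (hs : SSq V) {p : ℕ} (hp : p.Prime)
    (hc : ∀ a ∈ V, ∀ b ∈ V, a * b = b * a) (hpow : ∀ a ∈ V, a ^ p = 1)
    (hprop : ∀ L : Subgroup X, L ≠ ⊤ → SS L) (x : X) (k : ℕ) (hx : x ^ p ^ k = 1) :
    x ∈ centralizer (V : Set X) := by
  haveI := Fact.mk hp
  obtain ⟨S, hS, hSn, hVS, -, -, hl⟩ := exists_normal_coatom hV.1 hVt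
  haveI := hV.1
  have hDn := Dp_normal p S hSn
  have hVp : IsPGroup p V := fun v => ⟨1, Subtype.ext (by
      show (v : X) ^ p ^ 1 = 1
      rw [pow_one]; exact hpow _ v.2)⟩
  have hD : V ⊓ centralizer (Dp p S) = V := by
    refine hV.2.2 _ inferInstance inf_le_left ?_
    obtain ⟨y, hyV, hq, hy⟩ := ss_prime (hprop S hS.1) (H := V.subgroupOf S) inferInstance (by
      rw [Ne, subgroupOf_eq_bot, disjoint_iff, inf_eq_left.2 hVS]; exact hV.2.1)
    have hyV : (y : X) ∈ V := hyV
    have hqp : orderOf y = p := by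
      have h1 : orderOf y ∣ p := orderOf_dvd_of_pow_eq_one (Subtype.ext (hpow _ hyV))
      exact (Nat.prime_dvd_prime_iff_eq hq hp).1 h1
    have h1 : (y : X) ∈ V ⊓ centralizer (Dp p S) := by
      refine mem_inf.2 ⟨hyV, ?_⟩
      have h2 : Dp p S ≤ centralizer ({(y : X)} : Set X) := by
        unfold Dp
        rw [closure_le]
        rintro x ⟨g, hg, h, hh, hx⟩
        show x ∈ centralizer ({(y : X)} : Set X)
        rw [mem_centralizer_singleton_iff]
        rcases hx with rfl | rfl
        · exact congrArg Subtype.val (commutator_commute hy ⟨g, hg⟩ ⟨h, hh⟩).eq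
        · exact congrArg Subtype.val (commute_of_prime hp hqp (hy.conj_mem y (mem_zpowers y) ⟨g, hg⟩)).eq
      rw [mem_centralizer_iff]
      intro d hd
      exact mem_centralizer_singleton_iff.1 (h2 hd)
    intro h2
    rw [h2, mem_bot] at h1
    have h3 : y = 1 := Subtype.ext h1
    rw [h3, orderOf_one] at hq
    exact Nat.not_prime_one hq
  have hSC : ∀ g ∈ S, g ^ (p - 1) ∈ centralizer (V : Set X) := by
    intro g hg
    have h1 : g ^ (p - 1) ∈ Dp p S := subset_closure ⟨g, hg, g, hg, Or.inr rfl⟩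
    have h2 : V ≤ centralizer (Dp p S) := inf_eq_left.1 hD
    exact (le_centralizer_iff.1 h2) h1
  have hcop : Nat.Coprime (p - 1) (p ^ k) := by
    apply Nat.Coprime.pow_right
    rw [Nat.coprime_comm, hp.coprime_iff_not_dvd]
    intro h2
    have h3 := hp.two_le
    have := Nat.le_of_dvd (by omega) h2
    omega
  by_cases hlp : S.index = p
  · set C := centralizer (V : Set X) with hCdef
    have hCn : C.Normal := inferInstanceAs (centralizer (V : Set X)).Normal
    have hVC : V ≤ C := fun v hv => mem_centralizer_iff.2 fun w hw => hc w hw v hv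
    have hA : SS (X ⧸ C) := (ss_quot_iff C).2 (hs.mono hVC)
    have hsur := QuotientGroup.mk'_surjective C
    obtain ⟨P, hP⟩ := (isPGroup_zpowers hx).exists_le_sylow
    have hPn := ss_tower hA hp (by
      intro q hq hqd
      haveI := Fact.mk hq
      obtain ⟨a, ha⟩ := exists_prime_orderOf_dvd_card' q hqd
      obtain ⟨g, rfl⟩ := QuotientGroup.mk_surjective a
      have h1 : (g ^ p) ^ (p - 1) ∈ C := hSC _ (by
        have := S.pow_index_mem g
        rwa [hlp] at this)
      have h2 : q ∣ p * (p - 1) := by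
        rw [← ha]
        apply orderOf_dvd_of_pow_eq_one
        rw [← QuotientGroup.mk_pow, QuotientGroup.eq_one_iff, pow_mul]
        exact h1
      rcases hq.dvd_mul.1 h2 with h3 | h3
      · exact Nat.le_of_dvd hp.pos h3
      · have h4 := hp.two_le
        have := Nat.le_of_dvd (by omega) h3
        omega) (P.mapSurjective hsur)
    have hPC : ((P : Subgroup X) ⊔ C).Normal := by
      have := hPn.comap (QuotientGroup.mk' C)
      rwa [Sylow.coe_mapSurjective, comap_map_eq, QuotientGroup.ker_mk'] at this
    have h1 := fixed_points hp hV.1 hV.2.1 hVp P.2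
    have h2 : V ⊓ centralizer ((P : Subgroup X) : Set X) =
        V ⊓ centralizer (((P : Subgroup X) ⊔ C : Subgroup X) : Set X) := by
      apply le_antisymm
      · refine le_inf inf_le_left ?_
        rw [← le_centralizer_iff]
        refine sup_le ?_ ?_
        · rw [le_centralizer_iff]; exact inf_le_right
        · rw [le_centralizer_iff]
          refine inf_le_left.trans ?_
          rw [le_centralizer_iff]
      · exact inf_le_inf le_rfl (centralizer_le (le_sup_left : (P : Subgroup X) ≤ _))
    have h3 : V ⊓ centralizer ((P : Subgroup X) : Set X) = V := by
      refine hV.2.2 _ ?_ inf_le_left h1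
      rw [h2]; infer_instance
    exact le_centralizer_iff.1 (inf_eq_left.1 h3) (hP (mem_zpowers x))
  · have h1 : x ∈ S := mem_of_pow_coprime (((Nat.coprime_primes hl hp).2 hlp).pow_right k)
      (S.pow_index_mem x) (by rw [hx]; exact S.one_mem)
    exact mem_of_pow_coprime hcop (hSC x h1) (by rw [hx]; exact one_mem _)


theorem normal_of_sup_top {G : Type*} [Group G] {A B N : Subgroup G} (h : A ⊔ B = ⊤)
    (hA : ∀ a ∈ A, ∀ n ∈ N, a * n * a⁻¹ ∈ N) (hB : ∀ a ∈ B, ∀ n ∈ N, a * n * a⁻¹ ∈ N) :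
    N.Normal := by
  have aux : ∀ A : Subgroup G, (∀ a ∈ A, ∀ n ∈ N, a * n * a⁻¹ ∈ N) → A ≤ normalizer (N : Set G) := by
    intro A hA a ha
    rw [mem_normalizer_iff]
    refine fun n => ⟨hA a ha n, fun hn => ?_⟩
    have := hA a⁻¹ (A.inv_mem ha) _ hn
    have h2 : a⁻¹ * (a * n * a⁻¹) * a⁻¹⁻¹ = n := by group
    rwa [h2] at this
  exact normalizer_eq_top_iff.1 (top_le_iff.1 (h ▸ sup_le (aux A hA) (aux B hB)))

/-- `a` normalises `K ⊔ ⟨y⟩` as soon as the conjugate of `y` lies in it. -/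
theorem conj_sup_zpowers {G : Type*} [Group G] {K : Subgroup G} (hK : K.Normal) {a y : G}
    (h : a * y * a⁻¹ ∈ K ⊔ zpowers y) : ∀ n ∈ K ⊔ zpowers y, a * n * a⁻¹ ∈ K ⊔ zpowers y := by
  intro n hn
  have : K ⊔ zpowers y ≤ (K ⊔ zpowers y).comap (MulAut.conj a).toMonoidHom := by
    refine sup_le (fun k hk => ?_) ?_
    · exact mem_sup_left (hK.conj_mem k hk a)
    · rw [zpowers_le]; exact h
  exact this hn

theorem core_lemma {M : Type*} [Group M] [Finite M] (hM : PP M) {K R : Subgroup M}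
    (hK : IsMinimalNormal K) (hRn : R.Normal) (hKR : K < R)
    (hbt : ∀ J : Subgroup M, J.Normal → K ≤ J → J ≤ R → J = K ∨ J = R) (hR : SSq R)
    (hmin : ∀ J : Subgroup M, J.Normal → SSq J → R ≤ J) : False := by
  haveI hsolv := hM.solvable
  have hKn := hK.1
  have key1 : ∀ y ∈ R, y ∉ K → (K ⊔ zpowers y).Normal → False := by
    intro y hy hyK hn
    rcases hbt _ hn le_sup_left (sup_le hKR.le (by rwa [zpowers_le])) with h1 | h1
    · exact hyK (h1 ▸ mem_sup_right (mem_zpowers y))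
    · exact hKR.not_ge (hmin K hKn (ssq_of_zpowers hKn hn (by rw [h1]; exact hR)))
  obtain ⟨p, hp, hKc, hKp⟩ := minNormal_elem hK
  -- step 2
  have hKΦ : K ≤ frattini M := by
    unfold frattini Order.radical
    refine le_iInf₂ fun L' hL' => ?_
    by_contra hKL
    have htop : K ⊔ L' = ⊤ := hL'.2 _ (lt_of_le_of_ne le_sup_right (fun h => hKL (by
      rw [h]; exact le_sup_left)))
    have hKL2 : K ⊓ L' = ⊥ := by
      by_contra hb
      refine hKL (inf_eq_left.1 (hK.2.2 _ ?_ inf_le_left hb))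
      refine normal_of_sup_top htop ?_ ?_
      · intro a ha n hn
        rw [hKc a ha n hn.1]; simpa using hn
      · intro a ha n hn
        exact ⟨hKn.conj_mem n hn.1 a, L'.mul_mem (L'.mul_mem ha hn.2) (L'.inv_mem ha)⟩
    obtain ⟨y, hyR, hq, hy⟩ := ss_prime (hM.1 L' hL'.1) (H := R.subgroupOf L') inferInstance (by
      intro hb
      obtain ⟨r, hr, hrK⟩ := SetLike.exists_of_lt hKR
      have h1 : r ∈ K ⊔ L' := htop ▸ mem_top r
      obtain ⟨k, hk, l, hl, rfl⟩ := mem_sup_of_normal_left.1 h1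
      have h2 : l ∈ R := by
        have := R.mul_mem (R.inv_mem (hKR.le hk)) hr
        simpa using this
      have h3 : (⟨l, hl⟩ : L') ∈ R.subgroupOf L' := h2
      rw [hb, mem_bot] at h3
      have h4 : l = 1 := congrArg Subtype.val h3
      rw [h4, mul_one] at hrK
      exact hrK hk)
    refine key1 y hyR ?_ ?_
    · intro hyK
      have h1 : (y : M) ∈ K ⊓ L' := ⟨hyK, y.2⟩
      rw [hKL2, mem_bot] at h1
      have h3 : y = 1 := Subtype.ext h1
      rw [h3, orderOf_one] at hq
      exact Nat.not_prime_one hq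
    · refine normal_of_sup_top htop ?_ ?_
      · intro a ha n hn
        have ha' : a ∈ K ⊔ zpowers (y : M) := mem_sup_left ha
        exact mul_mem (mul_mem ha' hn) (inv_mem ha')
      · intro a ha
        apply conj_sup_zpowers hKn
        apply mem_sup_right
        obtain ⟨j, hj⟩ := hy.conj_mem y (mem_zpowers y) ⟨a, ha⟩
        exact ⟨j, congrArg Subtype.val hj⟩
  -- step 3
  have hsurK := QuotientGroup.mk'_surjective K
  have hmkK : ∀ x, QuotientGroup.mk' K x = 1 ↔ x ∈ K := fun x => QuotientGroup.eq_one_iff x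
  have hRKmin : IsMinimalNormal (R.map (QuotientGroup.mk' K)) := by
    refine ⟨hRn.map _ hsurK, ?_, ?_⟩
    · rw [Ne, Subgroup.map_eq_bot_iff, QuotientGroup.ker_mk']; exact hKR.not_ge
    · intro J hJ hJR hJb
      have h1 : J.comap (QuotientGroup.mk' K) ≤ R := by
        have := comap_mono (f := QuotientGroup.mk' K) hJR
        rwa [comap_map_eq, QuotientGroup.ker_mk', sup_eq_left.2 hKR.le] at this
      have h2 : K ≤ J.comap (QuotientGroup.mk' K) := fun k hk => by
        rw [mem_comap, (hmkK k).2 hk]; exact J.one_mem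
      rw [← map_comap_eq_self_of_surjective hsurK J] at hJb ⊢
      rcases hbt _ inferInstance h2 h1 with h3 | h3
      · rw [h3, Ne, Subgroup.map_eq_bot_iff, QuotientGroup.ker_mk'] at hJb
        exact absurd le_rfl hJb
      · rw [h3]
  obtain ⟨q, hq, hRc0, hRq0⟩ := minNormal_elem hRKmin
  have hRq : ∀ r ∈ R, r ^ q ∈ K := fun r hr => by
    rw [← hmkK, map_pow]; exact hRq0 _ (mem_map_of_mem _ hr)
  have hRc : ∀ r ∈ R, ∀ s ∈ R, r * s * r⁻¹ * s⁻¹ ∈ K := fun r hr s hs => by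
    rw [← hmkK]
    simp only [map_mul, map_inv]
    rw [hRc0 _ (mem_map_of_mem _ hr) _ (mem_map_of_mem _ hs)]
    group
  have hqp : q = p := by
    by_contra hne
    obtain ⟨Q, hQn, hQq, hQR, hRQ⟩ := frat_sylow' hq hKn hRn hKΦ (fun t ht => ⟨1, by
      rw [pow_one]; exact hRq t ht⟩)
    have hsurQ := QuotientGroup.mk'_surjective Q
    have h1 : SS (M ⧸ Q) := by
      refine saturation (N := K.map (QuotientGroup.mk' Q)) (hKn.map _ hsurQ)
        (map_le_iff_le_comap.2 (hKΦ.trans (frattini_le_comap_frattini_of_surjective hsurQ))) ?_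
      refine (ssq_map _ hsurQ hR).mono ?_
      refine (map_mono hRQ).trans ?_
      rw [Subgroup.map_sup, (Subgroup.map_eq_bot_iff (f := QuotientGroup.mk' Q) Q).2
        (by rw [QuotientGroup.ker_mk']), sup_bot_eq]
    have h2 := hmin Q hQn ((ss_quot_iff Q).1 h1)
    have h3 := inf_eq_bot_of_pq hp hq (Ne.symm hne) hKp hQq
    rw [inf_eq_left.2 (hKR.le.trans h2)] at h3
    exact hK.2.1 h3
  subst hqp
  -- step 4
  have hRΦ : ¬ R ≤ frattini M := fun h => by
    have h1 := hmin ⊥ inferInstance (saturation hRn h hR)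
    exact hK.2.1 (le_bot_iff.1 (hKR.le.trans h1))
  obtain ⟨L, hL, hRL⟩ : ∃ L : Subgroup M, IsCoatom L ∧ ¬ R ≤ L := by
    by_contra! h
    exact hRΦ (le_iInf₂ h)
  have hLR : L ⊔ R = ⊤ := hL.2 _ (lt_of_le_of_ne le_sup_left (fun h => hRL (by
      rw [h]; exact le_sup_right)))
  have hKL : K ≤ L := hKΦ.trans (frattini_le_coatom hL)
  have hTR : ∀ T, T ⋖ L → T ⊔ R ≠ ⊤ := fun T hT => hM.sup_ne_top hmin hL hT
  have hcov : ∀ T, T ⋖ L → ∀ Z, Z ≤ L → ¬ Z ≤ T → T ⊔ Z = L := by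
    intro T hT Z hZ hZT
    rcases eq_or_lt_of_le (sup_le hT.1.le hZ) with h | h
    · exact h
    · exact absurd h (hT.2 (lt_of_le_of_ne le_sup_left (fun h => hZT (by
        rw [h]; exact le_sup_right))))
  have hKT : ∀ T, T ⋖ L → K ≤ T := by
    intro T hT
    by_contra hn
    apply hTR T hT
    rw [← sup_eq_right.2 hKR.le, ← sup_assoc, hcov T hT K hKL hn, hLR]
  let C : Subgroup M := (centralizer (R.map (QuotientGroup.mk' K) : Set (M ⧸ K))).comap
    (QuotientGroup.mk' K)
  have hC : ∀ c ∈ C, ∀ r ∈ R, c * r * c⁻¹ * r⁻¹ ∈ K := by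
    intro c hc r hr
    rw [← hmkK]
    have h1 := mem_centralizer_iff.1 hc _ (mem_map_of_mem (QuotientGroup.mk' K) hr)
    simp only [map_mul, map_inv]
    rw [← h1]
    group
  have hCT : ∀ T, T ⋖ L → C ⊓ L ≤ T := by
    intro T hT
    by_contra hn
    have h1 := hcov T hT _ inf_le_right hn
    set Y := T ⊔ R with hY
    have hYs : SS Y := hM.1 Y (hTR T hT)
    have hRY : R ≤ Y := le_sup_right
    obtain ⟨y, hyR, hyK, hyn⟩ := ss_chief (K := ⊥) (N := K.subgroupOf Y) (H := R.subgroupOf Y)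
      inferInstance hYs inferInstance inferInstance (by rw [bot_inf_eq]; exact bot_le) (by
        intro h2
        apply hKR.not_ge
        intro r hr
        exact h2 (show (⟨r, hRY hr⟩ : Y) ∈ R.subgroupOf Y from hr))
    refine key1 y hyR hyK ?_
    refine normal_of_sup_top (A := Y) (B := C ⊓ L) ?_ ?_ ?_
    · rw [hY, sup_assoc, sup_comm R, ← sup_assoc, h1, hLR]
    · intro a ha
      apply conj_sup_zpowers hKn
      have h2 := hyn.conj_mem y (mem_sup_right (mem_zpowers y)) ⟨a, ha⟩
      have h3 : (K.subgroupOf Y ⊔ zpowers y).map Y.subtype ≤ K ⊔ zpowers (y : M) := by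
        rw [Subgroup.map_sup, MonoidHom.map_zpowers, subgroupOf_map_subtype]
        exact sup_le_sup_right inf_le_left _
      exact h3 (mem_map_of_mem Y.subtype h2)
    · intro a ha
      apply conj_sup_zpowers hKn
      have h2 : a * y * a⁻¹ = (a * y * a⁻¹ * (y : M)⁻¹) * y := by group
      rw [h2]
      exact mul_mem (mem_sup_left (hC a ha.1 y hyR)) (mem_sup_right (mem_zpowers _))
  -- step 5
  have hRt : R ≠ ⊤ := by
    intro h
    obtain ⟨S, hS, hSn, -, -, hSs, -⟩ := exists_normal_coatom (G := M) (N := K) hKn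
      (fun h => not_top_lt (h ▸ hKR))
    exact hS.1 (top_le_iff.1 (h ▸ hmin S hSn hSs))
  have hpC : ∀ (x : M) (k : ℕ), x ^ q ^ k = 1 → x ∈ C := by
    intro x k hx
    refine p_centralize hRKmin (map_ne_top (by rw [QuotientGroup.ker_mk']; exact hKR.le) hRt)
      (ssq_map _ hsurK hR) hq hRc0 hRq0
      (hM.surj _ hsurK).1 (QuotientGroup.mk' K x) k ?_
    rw [← map_pow, hx, map_one]
  -- step 6
  have h6 := no_p_elements (L := L) hq (by
    intro x k hx
    have h1 : (x : M) ∈ C ⊓ L := ⟨hpC x k (congrArg Subtype.val hx), x.2⟩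
    have : frattini L = ⨅ T ∈ {T : Subgroup L | IsCoatom T}, T := rfl
    rw [this]
    simp only [mem_iInf]
    intro T hT
    have hT2 : T.map L.subtype ⋖ L := by
      have hinj := L.subtype_injective
      have ht : (⊤ : Subgroup L).map L.subtype = L := by
        rw [← MonoidHom.range_eq_map, range_subtype]
      refine ⟨lt_of_le_of_ne (map_subtype_le T) fun h => hT.1 (map_injective hinj (h.trans ht.symm)), ?_⟩
      intro Z h1 h2
      have h3 : (Z.subgroupOf L).map L.subtype = Z := by
        rw [subgroupOf_map_subtype, inf_eq_left.2 h2.le]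
      rw [← h3] at h1
      have h4 := hT.2 _ ((map_lt_map_iff_of_injective hinj).1 h1)
      rw [h4, ht] at h3
      exact h2.ne h3.symm
    obtain ⟨z, hz, hzx⟩ := hCT _ hT2 h1
    have : z = x := Subtype.ext hzx
    rwa [← this])
  obtain ⟨k, hk, hk1⟩ := (K.bot_or_exists_ne_one).resolve_left hK.2.1
  have := h6 ⟨k, hKL hk⟩ 1 (Subtype.ext (by
    show k ^ q ^ 1 = 1
    rw [pow_one]; exact hKp k hk))
  exact hk1 (congrArg Subtype.val this)


theorem residual_minimal {M : Type*} [Group M] [Finite M] (hM : PP M) (hns : ¬ SS M)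
    {R : Subgroup M} (hRn : R.Normal) (hR : SSq R)
    (hmin : ∀ J : Subgroup M, J.Normal → SSq J → R ≤ J) : IsMinimalNormal R := by
  refine ⟨hRn, fun h => hns (by rw [h] at hR; exact hR), fun N' hN' hN'R hN'b => ?_⟩
  by_contra hne
  obtain ⟨K, ⟨hKn, hKR, hN'K⟩, hKmax⟩ :=
    Set.Finite.exists_maximal (Set.toFinite {J : Subgroup M | J.Normal ∧ J < R ∧ N' ≤ J})
      ⟨N', hN', lt_of_le_of_ne hN'R hne, le_rfl⟩
  have hKb : ⊥ < K := (bot_lt_iff_ne_bot.2 hN'b).trans_le hN'K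
  obtain ⟨N, ⟨hNn, hNK⟩, hNmax⟩ :=
    Set.Finite.exists_maximal (Set.toFinite {J : Subgroup M | J.Normal ∧ J < K})
      ⟨⊥, inferInstance, hKb⟩
  set f := QuotientGroup.mk' N with hf
  have hs : Function.Surjective f := QuotientGroup.mk'_surjective N
  have hker : f.ker = N := QuotientGroup.ker_mk' N
  have hcm : ∀ A : Subgroup M, N ≤ A → (A.map f).comap f = A := fun A hA => by
    rw [comap_map_eq, hker, sup_eq_left.2 hA]
  have hmc : ∀ J : Subgroup (M ⧸ N), (J.comap f).map f = J := fun J =>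
    map_comap_eq_self_of_surjective hs J
  have hNc : ∀ J : Subgroup (M ⧸ N), N ≤ J.comap f := fun J =>
    hker.ge.trans (ker_le_comap f J)
  refine core_lemma (hM.surj f hs) (K := K.map f) (R := R.map f) ⟨hKn.map f hs, ?_, ?_⟩
    (hRn.map f hs) ?_ ?_ (ssq_map f hs hR) ?_
  · rw [Ne, Subgroup.map_eq_bot_iff, hker]; exact hNK.not_ge
  · intro J hJ hJK hJb
    have h1 : J.comap f ≤ K := by
      have := comap_mono (f := f) hJK
      rwa [hcm K hNK.le] at this
    rcases eq_or_lt_of_le h1 with h2 | h2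
    · rw [← hmc J, h2]
    · exfalso
      apply hJb
      rw [← hmc J, Subgroup.map_eq_bot_iff, hker]
      exact hNmax (y := J.comap f) ⟨inferInstance, h2⟩ (hNc J)
  · refine lt_of_le_of_ne (map_mono hKR.le) fun h => hKR.ne ?_
    rw [← hcm K hNK.le, h, hcm R (hNK.le.trans hKR.le)]
  · intro J hJ hKJ hJR
    have h1 : J.comap f ≤ R := by
      have := comap_mono (f := f) hJR
      rwa [hcm R (hNK.le.trans hKR.le)] at this
    have h2 : K ≤ J.comap f := map_le_iff_le_comap.1 hKJ
    rcases eq_or_lt_of_le h1 with h3 | h3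
    · right; rw [← hmc J, h3]
    · left
      rw [← hmc J, le_antisymm (hKmax (y := J.comap f) ⟨inferInstance, h3, hN'K.trans h2⟩ h2) h2]
  · intro J hJ hJs
    rw [map_le_iff_le_comap]
    exact hmin _ inferInstance (ssq_of_map f hs (ker_le_comap f J) (by rw [hmc]; exact hJs))

theorem KU_restrict {G : Type*} [Group G] [Finite G] {T Y : Subgroup G} (hT : IsKUSubnormal T)
    (hTY : T < Y) : ∃ X : Subgroup Y, X ≠ ⊤ ∧ T.subgroupOf Y ≤ X ∧
      (X.Normal ∨ ∃ K ≤ X, K.Normal ∧ SSq K) := by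
  obtain ⟨n, c, h0, hl, hc⟩ := hT
  have hTc : ∀ i, T ≤ c i := by
    intro i
    induction i using Fin.induction with
    | zero => exact h0.ge
    | succ i ih => exact ih.trans (hc i).1
  obtain ⟨i, h1, h2⟩ : ∃ i : Fin n, Y ≤ c i.succ ∧ ¬ Y ≤ c i.castSucc := by
    by_contra! h
    have : ∀ i, Y ≤ c i := by
      intro i
      induction i using Fin.reverseInduction with
      | last => rw [hl]; exact le_top
      | cast i ih => exact h i ih
    exact hTY.not_ge (h0 ▸ this 0)
  refine ⟨(c i.castSucc).subgroupOf Y, ?_, comap_mono (hTc _), ?_⟩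
  · rw [Ne, subgroupOf_eq_top]; exact h2
  · rcases (hc i).2 with h3 | h3
    · left; exact h3.comap (inclusion h1)
    · right
      have h4 := ss_ker ((QuotientGroup.mk' ((c i.castSucc).subgroupOf (c i.succ)).normalCore).comp
        (inclusion h1)) (ss_of_isSupersoluble h3)
      refine ⟨_, ?_, inferInstance, h4⟩
      intro y hy
      have h5 : inclusion h1 y ∈ ((c i.castSucc).subgroupOf (c i.succ)).normalCore :=
        (QuotientGroup.eq_one_iff _).1 hy
      have h6 : inclusion h1 y ∈ (c i.castSucc).subgroupOf (c i.succ) := normalCore_le _ h5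
      exact h6

theorem map_covBy {G : Type*} [Group G] {M : Subgroup G} {T L : Subgroup M} (h : T ⋖ L) :
    T.map M.subtype ⋖ L.map M.subtype := by
  have hinj := M.subtype_injective
  refine ⟨(map_lt_map_iff_of_injective hinj).2 h.1, fun Z h1 h2 => ?_⟩
  have h3 : (Z.subgroupOf M).map M.subtype = Z := by
    rw [subgroupOf_map_subtype, inf_eq_left.2 (h2.le.trans (map_subtype_le L))]
  rw [← h3] at h1 h2
  exact h.2 ((map_lt_map_iff_of_injective hinj).1 h1) ((map_lt_map_iff_of_injective hinj).1 h2)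

theorem map_coatom_covBy {G : Type*} [Group G] {M : Subgroup G} {L : Subgroup M} (h : IsCoatom L) :
    L.map M.subtype ⋖ M := by
  have h1 := map_covBy (covBy_top_iff.2 h)
  rwa [← MonoidHom.range_eq_map, range_subtype] at h1

theorem isMaximalIn_of_covBy {G : Type*} [Group G] {H K : Subgroup G} (h : H ⋖ K) :
    IsMaximalIn H K := by
  refine ⟨h.1.le, ?_, fun B hB => ?_⟩
  · rw [Ne, subgroupOf_eq_top]; exact h.1.not_ge
  · have h1 : H < B.map K.subtype := by
      have := (map_lt_map_iff_of_injective K.subtype_injective).2 hB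
      rwa [subgroupOf_map_subtype, inf_eq_left.2 h.1.le] at this
    have h2 : B.map K.subtype = K := by
      rcases eq_or_lt_of_le (map_subtype_le B) with h3 | h3
      · exact h3
      · exact absurd h3 (h.2 h1)
    apply map_injective K.subtype_injective
    rw [h2, ← MonoidHom.range_eq_map, range_subtype]

theorem map_subgroupOf_self {G : Type*} [Group G] {M : Subgroup G} (T : Subgroup M) :
    (T.map M.subtype).subgroupOf M = T := comap_map_eq_self_of_injective M.subtype_injective T

theorem ss_2max {G : Type*} [Group G] [Finite G]
    (h : ∀ H : Subgroup G, IsNMaximal 3 H → IsKUSubnormal H) {L : Subgroup G}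
    (hL : IsNMaximal 2 L) : SS L := by
  apply ss_of_coatoms
  intro T hT
  have h1 := map_coatom_covBy hT
  obtain ⟨X, hX, hTX, h2⟩ := KU_restrict (h (T.map L.subtype) ⟨L, hL, isMaximalIn_of_covBy h1⟩) h1.1
  rw [map_subgroupOf_self] at hTX
  have h3 : X = T := by
    rcases eq_or_lt_of_le hTX with h4 | h4
    · exact h4.symm
    · exact absurd (hT.2 _ h4) hX
  rwa [h3] at h2

theorem PP_of_coatom {G : Type*} [Group G] [Finite G]
    (h : ∀ H : Subgroup G, IsNMaximal 3 H → IsKUSubnormal H) {M : Subgroup G}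
    (hM : IsCoatom M) : PP M := by
  have hM1 : IsNMaximal 1 M := ⟨⊤, rfl, isMaximalIn_of_covBy (covBy_top_iff.2 hM)⟩
  have hL2 : ∀ L : Subgroup M, IsCoatom L → IsNMaximal 2 (L.map M.subtype) := fun L hL =>
    ⟨M, hM1, isMaximalIn_of_covBy (map_coatom_covBy hL)⟩
  refine ⟨fun H hH => ?_, fun L T hL hT => ?_⟩
  · obtain ⟨L, hL, hHL⟩ := (eq_top_or_exists_le_coatom H).resolve_left hH
    have h1 := ss_2max h (hL2 L hL)
    have h2 : SS L := h1.equiv (L.equivMapOfInjective M.subtype M.subtype_injective).symm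
    exact (h2.subgroup (H.subgroupOf L)).equiv (subgroupOfEquivOfLe hHL)
  · have h1 := h (T.map M.subtype) ⟨_, hL2 L hL, isMaximalIn_of_covBy (map_covBy hT)⟩
    have h2 : T.map M.subtype < M := (map_covBy hT).1.trans_le (map_subtype_le L)
    obtain ⟨X, hX, hTX, h3⟩ := KU_restrict h1 h2
    rw [map_subgroupOf_self] at hTX
    exact ⟨X, hX, hTX, h3⟩

theorem main_aux {M : Type*} [Group M] [Finite M] (hM : PP M) : IsSupersoluble M ∨ IsSDH M := by
  by_cases hs : SS M
  · exact Or.inl (isSupersoluble_of_ss hs)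
  · right
    obtain ⟨R, hRn, hR, hmin⟩ := exists_residual M
    refine ⟨⟨fun h => hs (ss_of_isSupersoluble h), fun H hH => isSupersoluble_of_ss (hM.1 H hH)⟩, ?_⟩
    have : ssResidual M = R := by
      apply le_antisymm
      · exact biInf_le (fun N : Subgroup M => N) ⟨hRn, isSupersoluble_of_ss ((ss_quot_iff R).2 hR)⟩
      · refine le_iInf₂ ?_
        rintro J ⟨hJ, hJs⟩
        exact hmin J hJ ((ss_quot_iff J).1 (ss_of_isSupersoluble hJs))
    rw [this]
    exact residual_minimal hM hs hRn hR hmin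


/-- If every `3`-maximal subgroup of `G` is `K`-`𝔘`-subnormal in `G`, then every maximal
subgroup of `G` is either supersoluble or an `SDH`-group. -/
theorem maximal_supersoluble_or_SDH_of_3maximal_KUsubnormal
    (G : Type*) [Group G] [Finite G]
    (h : ∀ H : Subgroup G, IsNMaximal 3 H → IsKUSubnormal H) :
    ∀ M : Subgroup G, IsCoatom M → IsSupersoluble ↥M ∨ IsSDH ↥M := by
  intro M hM
  exact main_aux (PP_of_coatom h hM)
end

section
/- Let G be a finite minimal nonsupersoluble group in which every 3-maximal subgroup is K-𝔘-subnormal. Then the Frattini subgroup Φ(G^𝔘) of the supersoluble residual G^𝔘 has order 1 or a prime; more precisely, G^𝔘 is a Sylow t-subgroup of G for some prime t and |Φ(G^𝔘)| ≤ t. -/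
open Subgroup

section helpers

lemma cyc_iff {G : Type*} [Group G] (A B : Subgroup G) [(A.subgroupOf B).Normal] :
    IsCyclic (↥B ⧸ A.subgroupOf B) ↔ ∃ g ∈ B, ∀ b ∈ B, ∃ k : ℤ, (g ^ k)⁻¹ * b ∈ A := by
  constructor
  · rintro ⟨⟨g, hg⟩⟩
    obtain ⟨g, rfl⟩ := QuotientGroup.mk_surjective g
    refine ⟨g, g.2, fun b hb => ?_⟩
    obtain ⟨k, hk⟩ := hg (QuotientGroup.mk ⟨b, hb⟩)
    refine ⟨k, ?_⟩
    simp only at hk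
    rw [← QuotientGroup.mk_zpow, QuotientGroup.eq] at hk
    simpa [mem_subgroupOf] using hk
  · rintro ⟨g, hg, h⟩
    refine ⟨⟨QuotientGroup.mk ⟨g, hg⟩, fun x => ?_⟩⟩
    obtain ⟨b, rfl⟩ := QuotientGroup.mk_surjective x
    obtain ⟨k, hk⟩ := h b b.2
    refine ⟨k, ?_⟩
    simp only
    rw [← QuotientGroup.mk_zpow, QuotientGroup.eq]
    simpa [mem_subgroupOf] using hk

lemma ss_iff {G : Type*} [Group G] : IsSupersoluble G ↔
    ∃ (n : ℕ) (c : Fin (n + 1) → Subgroup G), (∀ i, (c i).Normal) ∧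
    c 0 = ⊥ ∧ c (Fin.last n) = ⊤ ∧
    ∀ i : Fin n, c i.castSucc ≤ c i.succ ∧
      ∃ g ∈ c i.succ, ∀ b ∈ c i.succ, ∃ k : ℤ, (g ^ k)⁻¹ * b ∈ c i.castSucc := by
  constructor
  · rintro ⟨n, c, hc, h0, h1, h⟩
    refine ⟨n, c, hc, h0, h1, fun i => ⟨(h i).1, ?_⟩⟩
    have := (hc i.castSucc).subgroupOf (c i.succ)
    exact (cyc_iff _ _).1 (h i).2
  · rintro ⟨n, c, hc, h0, h1, h⟩
    refine ⟨n, c, hc, h0, h1, fun i => ⟨(h i).1, ?_⟩⟩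
    have := (hc i.castSucc).subgroupOf (c i.succ)
    exact (cyc_iff _ _).2 (h i).2

lemma ss_surj {G H : Type*} [Group G] [Group H] (f : G →* H) (hf : Function.Surjective f)
    (h : IsSupersoluble G) : IsSupersoluble H := by
  rw [ss_iff] at *
  obtain ⟨n, c, hc, h0, h1, h⟩ := h
  refine ⟨n, fun i => (c i).map f, fun i => (hc i).map f hf, by simp [h0], ?_, fun i => ?_⟩
  · simp only [h1]; exact map_top_of_surjective f hf
  · refine ⟨map_mono (h i).1, ?_⟩
    obtain ⟨g, hg, hh⟩ := (h i).2
    refine ⟨f g, mem_map_of_mem f hg, ?_⟩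
    rintro _ ⟨b, hb, rfl⟩
    obtain ⟨k, hk⟩ := hh b hb
    exact ⟨k, by simpa using mem_map_of_mem f hk⟩

/-- cyclic-by-supersoluble, with normal cyclic kernel. -/
lemma ss_ext {G : Type*} [Group G] (K : Subgroup G) [K.Normal] (hK : IsCyclic K)
    (h : IsSupersoluble (G ⧸ K)) : IsSupersoluble G := by
  rw [ss_iff] at *
  obtain ⟨n, c, hc, h0, h1, h⟩ := h
  refine ⟨n + 1, Fin.cons ⊥ (fun i => (c i).comap (QuotientGroup.mk' K)), ?_, ?_, ?_, ?_⟩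
  · intro i
    refine Fin.cases ?_ (fun i => ?_) i
    · simp only [Fin.cons_zero]; infer_instance
    · simp only [Fin.cons_succ]; exact (hc i).comap _
  · simp
  · rw [← Fin.succ_last, Fin.cons_succ, h1, comap_top]
  · intro i
    refine Fin.cases ?_ (fun i => ?_) i
    · simp only [Fin.castSucc_zero, Fin.cons_zero, Fin.cons_succ, h0, bot_le, true_and]
      obtain ⟨⟨g, hg⟩⟩ := hK
      refine ⟨g, by simp [MonoidHom.comap_bot], fun b hb => ?_⟩
      have hb : b ∈ K := by simpa [MonoidHom.comap_bot] using hb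
      obtain ⟨k, hk⟩ := hg ⟨b, hb⟩
      refine ⟨k, ?_⟩
      have : (g : G) ^ k = b := by simpa using congrArg Subtype.val hk
      simp [this]
    · rw [Fin.castSucc_succ, Fin.cons_succ, Fin.cons_succ]
      refine ⟨comap_mono (h i).1, ?_⟩
      obtain ⟨g, hg, hh⟩ := (h i).2
      obtain ⟨g, rfl⟩ := QuotientGroup.mk'_surjective K g
      refine ⟨g, hg, fun b hb => ?_⟩
      obtain ⟨k, hk⟩ := hh _ hb
      exact ⟨k, by simpa using hk⟩

lemma ss_subsingleton {G : Type*} [Group G] [Subsingleton G] : IsSupersoluble G := by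
  rw [ss_iff]
  exact ⟨0, fun _ => ⊥, fun _ => inferInstance, rfl, Subsingleton.elim _ _, fun i => i.elim0⟩

lemma ss_cyclic {G : Type*} [Group G] [IsCyclic G] : IsSupersoluble G := by
  have : Subsingleton (G ⧸ (⊤ : Subgroup G)) := QuotientGroup.subsingleton_quotient_top
  exact ss_ext ⊤ inferInstance ss_subsingleton

lemma ss_solvable {G : Type*} [Group G] (h : IsSupersoluble G) : Group.IsSolvable G := by
  rw [ss_iff] at h
  obtain ⟨n, c, hc, h0, h1, h⟩ := h
  have : ∀ i : Fin (n+1), Group.IsSolvable (c i) := by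
    intro i
    induction i using Fin.induction with
    | zero => rw [h0]; infer_instance
    | succ i ih =>
      have := (hc i.castSucc).subgroupOf (c i.succ)
      have hcyc := (cyc_iff (c i.castSucc) (c i.succ)).2 (h i).2
      have : Group.IsSolvable (c i.succ ⧸ (c i.castSucc).subgroupOf (c i.succ)) := by
        have := hcyc.isMulCommutative
        exact Group.isSolvable_of_comm (fun a b => mul_comm' a b)
      refine Group.isSolvable_of_ker_le_range (inclusion (h i).1)
        (QuotientGroup.mk' ((c i.castSucc).subgroupOf (c i.succ))) ?_
      rw [QuotientGroup.ker_mk', inclusion_range]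
  have := this (Fin.last n)
  rw [h1] at this
  exact Group.isSolvable_of_surjective (f := (⊤ : Subgroup G).subtype) (fun x => ⟨⟨x, trivial⟩, rfl⟩)

/-- subgroups of a normal cyclic subgroup are normal -/
lemma normal_of_le_cyclic {G : Type*} [Group G] (C B : Subgroup G) [C.Normal] (hC : IsCyclic C)
    (hB : B ≤ C) : B.Normal := by
  refine ⟨fun b hb g => ?_⟩
  obtain ⟨⟨z, hz⟩⟩ := hC
  have hz' : ∀ x ∈ C, ∃ k : ℤ, (z : G) ^ k = x := by
    intro x hx
    obtain ⟨k, hk⟩ := hz ⟨x, hx⟩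
    exact ⟨k, by simpa using congrArg Subtype.val hk⟩
  obtain ⟨k, hk⟩ := hz' _ ((inferInstance : C.Normal).conj_mem z z.2 g)
  obtain ⟨m, rfl⟩ := hz' b (hB hb)
  rw [← conj_zpow, ← hk, ← zpow_mul, mul_comm, zpow_mul]
  exact zpow_mem hb _

/-- In a supersoluble group each nontrivial normal subgroup contains a normal one of prime order. -/
lemma ss_minnormal {Y : Type*} [Group Y] [Finite Y] (h : IsSupersoluble Y) (N : Subgroup Y)
    [N.Normal] (hN : N ≠ ⊥) : ∃ N1 : Subgroup Y, N1.Normal ∧ N1 ≤ N ∧ (Nat.card N1).Prime := by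
  rw [ss_iff] at h
  obtain ⟨n, c, hc, h0, h1, h⟩ := h
  have ex : ∃ i : Fin n, c i.castSucc ⊓ N = ⊥ ∧ c i.succ ⊓ N ≠ ⊥ := by
    by_contra hcon
    push Not at hcon
    have : ∀ i : Fin (n+1), c i ⊓ N = ⊥ := by
      intro i
      induction i using Fin.induction with
      | zero => rw [h0]; simp
      | succ i ih => exact hcon i ih
    have := this (Fin.last n)
    rw [h1, top_inf_eq] at this
    exact hN this
  obtain ⟨i, hi0, hi1⟩ := ex
  set C := c i.succ ⊓ N with hCdef
  have := hc i.succ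
  have := hc i.castSucc
  have : C.Normal := inferInstanceAs (c i.succ ⊓ N).Normal
  have := (hc i.castSucc).subgroupOf (c i.succ)
  have hcyc := (cyc_iff (c i.castSucc) (c i.succ)).2 (h i).2
  have hC : IsCyclic C := by
    refine isCyclic_of_injective ((QuotientGroup.mk' ((c i.castSucc).subgroupOf (c i.succ))).comp
      (inclusion (inf_le_left : C ≤ c i.succ))) ?_
    rw [injective_iff_map_eq_one]
    intro x hx
    simp only [MonoidHom.comp_apply, QuotientGroup.mk'_apply, QuotientGroup.eq_one_iff,
      mem_subgroupOf, coe_inclusion] at hx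
    have : (x : Y) ∈ c i.castSucc ⊓ N := ⟨hx, x.2.2⟩
    rw [hi0, mem_bot] at this
    exact Subtype.ext this
  have hcard : Nat.card C ≠ 1 := fun h => hi1 (card_eq_one.1 h)
  obtain ⟨p, hp, hpd⟩ := Nat.exists_prime_and_dvd hcard
  have := Fact.mk hp
  obtain ⟨x, hx⟩ := exists_prime_orderOf_dvd_card' p hpd
  have hle : zpowers (x : Y) ≤ C := by rw [zpowers_le]; exact x.2
  refine ⟨zpowers (x : Y), normal_of_le_cyclic C _ hC hle, hle.trans inf_le_right, ?_⟩
  rw [Nat.card_zpowers, Subgroup.orderOf_coe, hx]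
  exact hp

/-- A minimal normal subgroup meeting `K` trivially with supersoluble quotient mod `K`. -/
lemma min_card_prime {X : Type*} [Group X] [Finite X] (N K : Subgroup X) (hN : IsMinimalNormal N)
    [K.Normal] (hK : IsSupersoluble (X ⧸ K)) (hd : K ⊓ N = ⊥) : (Nat.card N).Prime := by
  have := hN.1
  have hinj : Function.Injective ((QuotientGroup.mk' K).comp N.subtype) := by
    rw [injective_iff_map_eq_one]
    intro x hx
    simp only [MonoidHom.comp_apply, QuotientGroup.mk'_apply, QuotientGroup.eq_one_iff,
      subtype_apply] at hx
    have : (x : X) ∈ K ⊓ N := ⟨hx, x.2⟩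
    rw [hd, mem_bot] at this
    exact Subtype.ext this
  have : (N.map (QuotientGroup.mk' K)).Normal := hN.1.map _ (QuotientGroup.mk'_surjective K)
  have hne : N.map (QuotientGroup.mk' K) ≠ ⊥ := by
    intro h0
    rw [Subgroup.map_eq_bot_iff, QuotientGroup.ker_mk'] at h0
    rw [inf_eq_right.2 h0] at hd
    exact hN.2.1 hd
  obtain ⟨N1, hn, hle, hp⟩ := ss_minnormal hK _ hne
  have := hn
  have h1 : (N1.comap (QuotientGroup.mk' K) ⊓ N) = N := by
    refine hN.2.2 _ inferInstance inf_le_right ?_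
    intro h0
    have : N1 = ⊥ := by
      rw [eq_bot_iff]
      intro y hy
      obtain ⟨x, hx, rfl⟩ := hle hy
      have : x ∈ N1.comap (QuotientGroup.mk' K) ⊓ N := ⟨hy, hx⟩
      rw [h0, mem_bot] at this
      simp [this]
    rw [this] at hp
    simp [Nat.not_prime_one] at hp
  have h2 : N.map (QuotientGroup.mk' K) = N1 :=
    le_antisymm (map_le_iff_le_comap.2 (inf_eq_right.1 h1)) hle
  have h3 : Nat.card N = Nat.card N1 := by
    rw [← h2]
    have := Nat.card_congr (MonoidHom.ofInjective hinj).toEquiv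
    rw [this, MonoidHom.range_comp, range_subtype]
  rwa [h3]

lemma index_le_card_of_sup {Y : Type*} [Group Y] [Finite Y] {H N : Subgroup Y} [N.Normal]
    (h : H ⊔ N = ⊤) : H.index ≤ Nat.card N := by
  refine Nat.card_le_card_of_surjective (fun n : N => (QuotientGroup.mk (n : Y) : Y ⧸ H)) ?_
  intro y
  obtain ⟨y, rfl⟩ := QuotientGroup.mk_surjective y
  have hy : y ∈ N ⊔ H := by rw [sup_comm, h]; trivial
  rw [← SetLike.mem_coe, Subgroup.normal_mul] at hy
  obtain ⟨n, hn, k, hk, rfl⟩ := hy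
  refine ⟨⟨n, hn⟩, ?_⟩
  rw [QuotientGroup.eq]
  simpa using hk

lemma ss_sylow_normal_aux (n : ℕ) : ∀ {Y : Type*} [Group Y] [Finite Y], Nat.card Y = n →
    IsSupersoluble Y → ∀ (q : ℕ) [Fact q.Prime], (∀ p : ℕ, p.Prime → p ∣ Nat.card Y → p ≤ q) →
    ∀ Q : Sylow q Y, (Q : Subgroup Y).Normal := by
  induction n using Nat.strong_induction_on with
  | _ n ih =>
  intro Y _ _ hn hY q hq hmax Q
  by_cases ht : Subsingleton Y
  · have : (Q : Subgroup Y) = ⊥ := Subsingleton.elim _ _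
    rw [this]; infer_instance
  have : Nontrivial Y := not_subsingleton_iff_nontrivial.1 ht
  obtain ⟨N1, hN1, -, hp⟩ := ss_minnormal hY ⊤ top_ne_bot
  have hcard : Nat.card Y = Nat.card (Y ⧸ N1) * Nat.card N1 := card_eq_card_quotient_mul_card_subgroup N1
  have hs := QuotientGroup.mk'_surjective N1
  have hQ := ih (Nat.card (Y ⧸ N1)) (by
      rw [← hn, hcard]
      exact lt_mul_of_one_lt_right Nat.card_pos hp.one_lt) rfl (ss_surj _ hs hY) q
      (fun p hp hd => hmax p hp (hcard ▸ hd.mul_right _)) (Q.mapSurjective hs)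
  have : ((Q : Subgroup Y).map (QuotientGroup.mk' N1)).Normal := hQ
  have hW : ((Q : Subgroup Y).map (QuotientGroup.mk' N1)).comap (QuotientGroup.mk' N1) = (Q : Subgroup Y) ⊔ N1 := by
    rw [comap_map_eq, QuotientGroup.ker_mk']
  have : ((Q : Subgroup Y) ⊔ N1).Normal := hW ▸ inferInstance
  have hF := Q.normalizer_sup_eq_top' (N := (Q : Subgroup Y) ⊔ N1) le_sup_left
  have hF' : normalizer (Q : Set Y) ⊔ N1 = ⊤ := by
    rw [← hF]
    apply le_antisymm
    · exact sup_le_sup_left le_sup_right _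
    · exact sup_le le_sup_left (sup_le (le_normalizer.trans le_sup_left) le_sup_right)
  have hidx : (normalizer (Q : Set Y)).index ≤ Nat.card N1 := by
    exact index_le_card_of_sup hF'
  have hle : Nat.card (Sylow q Y) ≤ q := by
    rw [Q.card_eq_index_normalizer]
    exact hidx.trans (hmax _ hp (card_subgroup_dvd_card N1))
  have hmod := card_sylow_modEq_one q Y
  have hpos : 0 < Nat.card (Sylow q Y) := Nat.card_pos
  have h1 : Nat.card (Sylow q Y) = 1 := by
    have := (Nat.modEq_iff_dvd' hpos).1 hmod.symm
    rcases Nat.eq_zero_or_pos (Nat.card (Sylow q Y) - 1) with h | h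
    · omega
    · have := Nat.le_of_dvd h this
      omega
  rw [Q.card_eq_index_normalizer, index_eq_one] at h1
  exact normalizer_eq_top_iff.1 h1

lemma ss_sylow_normal {Y : Type*} [Group Y] [Finite Y] (hY : IsSupersoluble Y) (q : ℕ)
    [Fact q.Prime] (hmax : ∀ p : ℕ, p.Prime → p ∣ Nat.card Y → p ≤ q) (Q : Sylow q Y) :
    (Q : Subgroup Y).Normal := ss_sylow_normal_aux _ rfl hY q hmax Q

lemma maximalIn_lt {G : Type*} [Group G] {H K : Subgroup G} (h : IsMaximalIn H K) : H < K := by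
  refine lt_of_le_of_ne h.1 ?_
  rintro rfl
  exact h.2.1 (subgroupOf_self H)

lemma exists_maximalIn {G : Type*} [Group G] [Finite G] {B K : Subgroup G} (h : B < K) :
    ∃ M, B ≤ M ∧ IsMaximalIn M K := by
  have hne : B.subgroupOf K ≠ ⊤ := by
    intro h1
    rw [subgroupOf_eq_top] at h1
    exact absurd h1 (not_le_of_gt h)
  obtain ⟨M, hM, hle⟩ := (eq_top_or_exists_le_coatom (B.subgroupOf K)).resolve_left hne
  refine ⟨M.map K.subtype, ?_, ?_, ?_⟩
  · intro b hb
    exact ⟨⟨b, h.le hb⟩, hle hb, rfl⟩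
  · exact map_subtype_le M
  · have : (M.map K.subtype).subgroupOf K = M :=
      comap_map_eq_self_of_injective K.subtype_injective M
    rwa [this]

lemma exists_three {G : Type*} [Group G] [Finite G] {B0 B1 B2 : Subgroup G} (h0 : B0 < B1)
    (h1 : B1 < B2) (h2 : B2 < ⊤) : ∃ H, IsNMaximal 3 H ∧ B0 ≤ H ∧ H ≠ ⊤ := by
  obtain ⟨M1, hM1, h1'⟩ := exists_maximalIn h2
  obtain ⟨M2, hM2, h2'⟩ := exists_maximalIn (h1.trans_le hM1)
  obtain ⟨M3, hM3, h3'⟩ := exists_maximalIn (h0.trans_le hM2)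
  refine ⟨M3, ⟨M2, ⟨M1, ⟨⊤, rfl, h1'⟩, h2'⟩, h3'⟩, hM3, ?_⟩
  exact ((maximalIn_lt h3').trans ((maximalIn_lt h2').trans (maximalIn_lt h1'))).ne

lemma ku_step {G : Type*} [Group G] (T S : Subgroup G) (hS : S = ⊤)
    (h2 : (T.subgroupOf S).Normal ∨ IsSupersoluble (↥S ⧸ (T.subgroupOf S).normalCore)) :
    T.Normal ∨ ∃ K : Subgroup G, ∃ _ : K.Normal, K ≤ T ∧ IsSupersoluble (G ⧸ K) := by
  subst hS
  rcases h2 with h2 | h2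
  · left
    have := h2.map (⊤ : Subgroup G).subtype (fun x => ⟨⟨x, trivial⟩, rfl⟩)
    rwa [subgroupOf_map_subtype, inf_top_eq] at this
  · right
    have hs : Function.Surjective (⊤ : Subgroup G).subtype := fun x => ⟨⟨x, trivial⟩, rfl⟩
    set K := (T.subgroupOf ⊤).normalCore with hK
    have hn : (K.map (⊤ : Subgroup G).subtype).Normal := (normalCore_normal _).map _ hs
    refine ⟨K.map (⊤ : Subgroup G).subtype, hn, ?_, ?_⟩
    · refine (map_mono (normalCore_le _)).trans ?_
      rw [subgroupOf_map_subtype]; exact inf_le_left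
    · refine ss_surj (QuotientGroup.map K (K.map (⊤ : Subgroup G).subtype) (⊤ : Subgroup G).subtype
        (le_comap_map _ _)) ?_ h2
      intro y
      obtain ⟨y, rfl⟩ := QuotientGroup.mk_surjective y
      exact ⟨QuotientGroup.mk ⟨y, trivial⟩, rfl⟩

lemma ku_top {G : Type*} [Group G] {H : Subgroup G} (h : IsKUSubnormal H) (hH : H ≠ ⊤) :
    ∃ T : Subgroup G, H ≤ T ∧ T ≠ ⊤ ∧ (T.Normal ∨
      ∃ K : Subgroup G, ∃ _ : K.Normal, K ≤ T ∧ IsSupersoluble (G ⧸ K)) := by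
  obtain ⟨n, c, h0, h1, h⟩ := h
  have hle : ∀ i, H ≤ c i := by
    intro i
    induction i using Fin.induction with
    | zero => exact h0.ge
    | succ i ih => exact ih.trans (h i).1
  have ex : ∃ i : Fin n, c i.castSucc ≠ ⊤ ∧ c i.succ = ⊤ := by
    by_contra hcon
    push Not at hcon
    have : ∀ i : Fin (n+1), c i ≠ ⊤ := by
      intro i
      induction i using Fin.induction with
      | zero => rwa [h0]
      | succ i ih => exact hcon i ih
    exact this _ h1
  obtain ⟨i, hi0, hi1⟩ := ex
  exact ⟨c i.castSucc, hle _, hi0, ku_step _ _ hi1 (h i).2⟩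

/-- a maximal proper normal subgroup above a proper normal subgroup -/
lemma exists_max_normal {G : Type*} [Group G] [Finite G] (P : Subgroup G → Prop) {T : Subgroup G}
    (hT : P T) : ∃ R : Subgroup G, T ≤ R ∧ P R ∧ ∀ S, P S → R ≤ S → S = R := by
  obtain ⟨R, hTR, hR⟩ := Finite.exists_le_maximal hT
  exact ⟨R, hTR, hR.prop, fun S hS hRS => le_antisymm (hR.le_of_ge hS hRS) hRS⟩

lemma simple_quot {G : Type*} [Group G] (R : Subgroup G) [R.Normal] (hR : R ≠ ⊤)
    (h : ∀ S : Subgroup G, S.Normal → R ≤ S → S ≠ ⊤ → S = R) : IsSimpleGroup (G ⧸ R) := by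
  have hs := QuotientGroup.mk'_surjective R
  have : Nontrivial (G ⧸ R) := by
    rw [← not_subsingleton_iff_nontrivial]
    intro h'
    exact hR (QuotientGroup.subgroup_eq_top_of_subsingleton R h')
  refine ⟨fun N hN => ?_⟩
  by_cases ht : N = ⊤
  · exact Or.inr ht
  left
  have h1 := h (N.comap (QuotientGroup.mk' R)) (hN.comap _) (by
      have := ker_le_comap (QuotientGroup.mk' R) N
      rwa [QuotientGroup.ker_mk'] at this) (by
      intro h2
      apply ht
      rw [← map_comap_eq_self_of_surjective hs N, h2, map_top_of_surjective _ hs])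
  rw [← map_comap_eq_self_of_surjective hs N, h1, Subgroup.map_eq_bot_iff, QuotientGroup.ker_mk']

/-- A finite simple group without long chains of subgroups is soluble. -/
lemma simple_short {Q : Type*} [Group Q] [Finite Q] [IsSimpleGroup Q]
    (h : ∀ B0 B1 B2 : Subgroup Q, ⊥ < B0 → B0 < B1 → B1 < B2 → B2 < ⊤ → False) :
    Group.IsSolvable Q := by
  by_contra hns
  have hc1 : Nat.card Q ≠ 1 := Finite.one_lt_card.ne'
  set p := (Nat.card Q).minFac with hp
  have hpp : p.Prime := Nat.minFac_prime hc1
  have : Fact p.Prime := ⟨hpp⟩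
  obtain ⟨P⟩ : Nonempty (Sylow p Q) := inferInstance
  have hbot : (P : Subgroup Q) ≠ ⊥ := P.ne_bot_of_dvd_card (Nat.minFac_dvd _)
  have htop : (P : Subgroup Q) ≠ ⊤ := by
    intro h1
    apply hns
    have hPQ : IsPGroup p Q := by
      have := P.2
      rw [h1] at this
      exact this.of_equiv topEquiv
    have := hPQ.isNilpotent
    infer_instance
  have hN : normalizer (P : Set Q) ≠ ⊤ := by
    intro h1
    have := normalizer_eq_top_iff.1 h1
    rcases this.eq_bot_or_eq_top with h2 | h2
    · exact hbot h2
    · exact htop h2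
  have key : normalizer (P : Set Q) ≤ centralizer (P : Set Q) := by
    obtain ⟨k, hk⟩ := P.2.exists_card_eq
    have hlt : ∀ {A B : Subgroup Q}, A ≤ B → Nat.card A < Nat.card B → A < B := by
      intro A B hAB hc
      refine lt_of_le_of_ne hAB ?_
      rintro rfl
      exact lt_irrefl _ hc
    have hpow : ∀ j, p ^ j < p ^ (j + 1) := fun j => Nat.pow_lt_pow_right hpp.one_lt (Nat.lt_succ_self j)
    have hex : ∀ j (B : Subgroup Q), p ^ (j+1) ∣ Nat.card B → ∃ A : Subgroup Q, A ≤ B ∧ Nat.card A = p ^ (j+1) := by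
      intro j B hB
      obtain ⟨A, hA⟩ := Sylow.exists_subgroup_card_pow_prime p hB
      exact ⟨A.map B.subtype, map_subtype_le A, by
        rw [← hA]; exact (Nat.card_congr (A.equivMapOfInjective _ B.subtype_injective).toEquiv).symm⟩
    have hgt : ∀ j (A : Subgroup Q), Nat.card A = p ^ (j+1) → ⊥ < A := by
      intro j A hA
      refine hlt bot_le ?_
      rw [hA, card_bot]
      exact Nat.one_lt_pow (Nat.succ_ne_zero j) hpp.one_lt
    match k, hk with
    | 0, hk =>
      exact absurd (card_eq_one.1 (by simpa using hk)) hbot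
    | 1, hk =>
      exact IsCyclic.normalizer_le_centralizer (by rw [hp]) (isCyclic_of_prime_card (by simpa using hk))
    | 2, hk =>
      have hmc := IsPGroup.isMulCommutative_of_card_eq_prime_sq hk
      have hcomm : ∀ a b : (P : Subgroup Q), a * b = b * a := fun a b => mul_comm' a b
      have hPN : normalizer (P : Set Q) = P := by
        by_contra hne
        have hlt' : (P : Subgroup Q) < normalizer (P : Set Q) := lt_of_le_of_ne le_normalizer (Ne.symm hne)
        obtain ⟨A, hA, hcA⟩ := hex 0 P (by rw [hk]; exact pow_dvd_pow _ (by norm_num))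
        exact h A P _ (hgt 0 A hcA) (hlt hA (by rw [hk, hcA]; exact hpow 1)) hlt' hN.lt_top
      rw [hPN]
      intro x hx y hy
      exact congrArg Subtype.val (hcomm ⟨y, hy⟩ ⟨x, hx⟩)
    | j + 3, hk =>
      exfalso
      obtain ⟨A, hA, hcA⟩ := hex 1 P (by rw [hk]; exact pow_dvd_pow _ (by omega))
      obtain ⟨B, hB, hcB⟩ := hex 0 A (by rw [hcA]; exact pow_dvd_pow _ (by omega))
      refine h B A P (hgt 0 B hcB) (hlt hB (by rw [hcA, hcB]; exact hpow 1)) (hlt hA ?_) htop.lt_top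
      rw [hk, hcA]; exact Nat.pow_lt_pow_right hpp.one_lt (by omega)
  have hcomp := MonoidHom.ker_transferSylow_isComplement' P key
  rcases (MonoidHom.normal_ker (MonoidHom.transferSylow P key)).eq_bot_or_eq_top with h2 | h2
  · rw [h2] at hcomp
    exact htop (isComplement'_bot_left.1 hcomp)
  · rw [h2] at hcomp
    exact hbot (isComplement'_top_left.1 hcomp)

lemma solvable_of_quot {G : Type*} [Group G] (K : Subgroup G) [K.Normal]
    (h1 : Group.IsSolvable K) (h2 : Group.IsSolvable (G ⧸ K)) : Group.IsSolvable G := by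
  refine Group.isSolvable_of_ker_le_range K.subtype (QuotientGroup.mk' K) ?_
  rw [QuotientGroup.ker_mk', range_subtype]

lemma main_solvable (G : Type*) [Group G] [Finite G] (hG : IsMinimalNonsupersoluble G)
    (h : ∀ H : Subgroup G, IsNMaximal 3 H → IsKUSubnormal H) : Group.IsSolvable G := by
  by_contra hns
  have hnt : (⊥ : Subgroup G) ≠ ⊤ := by
    intro h1
    have : Subsingleton G := (Subgroup.subsingleton_iff).1 (subsingleton_of_bot_eq_top h1)
    exact hG.1 ss_subsingleton
  obtain ⟨R, -, ⟨hRn, hRt⟩, hmax⟩ := exists_max_normal (fun R : Subgroup G => R.Normal ∧ R ≠ ⊤)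
    (T := ⊥) ⟨inferInstance, hnt⟩
  have := simple_quot R hRt (fun S hS hle hne => hmax S ⟨hS, hne⟩ hle)
  apply hns
  refine solvable_of_quot R (ss_solvable (hG.2 R hRt)) ?_
  apply simple_short
  intro B0 B1 B2 h0 h1 h2 h3
  have hs := QuotientGroup.mk'_surjective R
  have hlt : ∀ {A B : Subgroup (G ⧸ R)}, A < B → A.comap (QuotientGroup.mk' R) < B.comap (QuotientGroup.mk' R) :=
    fun hAB => (comap_lt_comap_of_surjective hs).2 hAB
  obtain ⟨H, hH, hle, hHt⟩ := exists_three (hlt h1) (hlt h2) (by simpa using hlt h3)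
  have hRH : R < H := by
    refine lt_of_lt_of_le ?_ hle
    have := hlt h0
    rwa [MonoidHom.comap_bot, QuotientGroup.ker_mk'] at this
  obtain ⟨T, hHT, hT, hcase⟩ := ku_top (h H hH) hHt
  rcases hcase with hTn | ⟨K, hK, hKT, hss⟩
  · have := hmax T ⟨hTn, hT⟩ (hRH.le.trans hHT)
    exact absurd (this ▸ hHT) (not_le_of_gt hRH)
  · have hKt : K ≠ ⊤ := fun h => hT (top_le_iff.1 (h ▸ hKT))
    exact hns (solvable_of_quot K (ss_solvable (hG.2 K hKt)) (ss_solvable hss))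

lemma frat {Y : Type*} [Group Y] [Finite Y] (N1 : Subgroup Y) [N1.Normal] {q : ℕ} [Fact q.Prime]
    (Q : Sylow q Y) (hQ : ((Q : Subgroup Y).map (QuotientGroup.mk' N1)).Normal) :
    ((Q : Subgroup Y) ⊔ N1).Normal ∧ normalizer (Q : Set Y) ⊔ N1 = ⊤ := by
  have hW : ((Q : Subgroup Y).map (QuotientGroup.mk' N1)).comap (QuotientGroup.mk' N1)
      = (Q : Subgroup Y) ⊔ N1 := by
    rw [comap_map_eq, QuotientGroup.ker_mk']
  have hn : ((Q : Subgroup Y) ⊔ N1).Normal := hW ▸ inferInstance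
  refine ⟨hn, ?_⟩
  rw [← Q.normalizer_sup_eq_top' (N := (Q : Subgroup Y) ⊔ N1) le_sup_left]
  apply le_antisymm
  · exact sup_le_sup_left le_sup_right _
  · exact sup_le le_sup_left (sup_le (le_normalizer.trans le_sup_left) le_sup_right)

lemma ss_min_in {X : Type*} [Group X] [Finite X] (W A : Subgroup X) (hW : IsSupersoluble W)
    (hAW : A ≤ W) [A.Normal] (hA : A ≠ ⊥) :
    ∃ A1 : Subgroup X, A1 ≤ A ∧ (Nat.card A1).Prime ∧ W ≤ normalizer (A1 : Set X) := by
  have hne : A.subgroupOf W ≠ ⊥ := by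
    intro h
    rw [subgroupOf_eq_bot, disjoint_iff, inf_eq_left.2 hAW] at h
    exact hA h
  obtain ⟨N1, hn, hle, hp⟩ := ss_minnormal hW (A.subgroupOf W) hne
  refine ⟨N1.map W.subtype, ?_, ?_, ?_⟩
  · rw [map_le_iff_le_comap]; exact hle
  · rwa [← Nat.card_congr (N1.equivMapOfInjective _ W.subtype_injective).toEquiv]
  · rw [← normal_subgroupOf_iff_le_normalizer (map_subtype_le N1)]
    have : (N1.map W.subtype).subgroupOf W = N1 :=
      comap_map_eq_self_of_injective W.subtype_injective N1
    rwa [this]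

lemma X_main (X : Type*) [Group X] [Finite X] [Group.IsSolvable X] (hX : ¬ IsSupersoluble X)
    (hsub : ∀ H : Subgroup X, H ≠ ⊤ → IsSupersoluble H)
    (hquot : ∀ (K : Subgroup X) (_ : K.Normal), K ≠ ⊥ → IsSupersoluble (X ⧸ K)) :
    ∃ r : ℕ, r.Prime ∧ ∃ N : Subgroup X, IsMinimalNormal N ∧ IsPGroup r N ∧ ¬ r ∣ N.index ∧
      ∀ (K : Subgroup X) (_ : K.Normal), IsSupersoluble (X ⧸ K) → N ≤ K := by
  have hnt : Nontrivial X := by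
    rw [← not_subsingleton_iff_nontrivial]
    intro h
    exact hX ss_subsingleton
  obtain ⟨N, -, hNmin⟩ := Finite.exists_le_minimal
    (p := fun N : Subgroup X => N.Normal ∧ N ≠ ⊥) (a := ⊤) ⟨inferInstance, top_ne_bot⟩
  have hN : IsMinimalNormal N := ⟨hNmin.prop.1, hNmin.prop.2, fun M h1 h2 h3 =>
    le_antisymm h2 (hNmin.le_of_le ⟨h1, h3⟩ h2)⟩
  have hNn := hN.1
  have hnp : ¬ (Nat.card N).Prime := by
    intro h
    have := Fact.mk h
    exact hX (ss_ext N (isCyclic_of_prime_card rfl) (hquot N hN.1 hN.2.1))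
  have hle : ∀ (K : Subgroup X) (_ : K.Normal), IsSupersoluble (X ⧸ K) → N ≤ K := by
    intro K hK hs
    by_cases h0 : K ⊓ N = ⊥
    · exact absurd (min_card_prime N K hN hs h0) hnp
    · exact inf_eq_right.1 (hN.2.2 _ inferInstance inf_le_right h0)
  have huniq : ∀ (K : Subgroup X) (_ : K.Normal), K ≠ ⊥ → N ≤ K :=
    fun K hK h => hle K hK (hquot K hK h)
  have hab : N ≤ centralizer (N : Set X) := by
    rw [← commutator_eq_bot_iff_le_centralizer]
    by_contra h
    have h1 := Group.IsSolvable.commutator_lt_of_ne_bot hN.2.1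
    exact h1.ne (hN.2.2 _ inferInstance h1.le h)
  have hcardN : Nat.card N ≠ 1 := fun h => hN.2.1 (card_eq_one.1 h)
  obtain ⟨r, hr, hrd⟩ := Nat.exists_prime_and_dvd hcardN
  have := Fact.mk hr
  have hNr : IsPGroup r N := by
    obtain ⟨S⟩ : Nonempty (Sylow r N) := inferInstance
    have hSn : (S : Subgroup N).Normal := by
      refine ⟨fun n hn g => ?_⟩
      have : g * n = n * g := Subtype.ext (hab n.2 _ g.2)
      rw [this]; simpa using hn
    have := S.characteristic_of_normal hSn
    have hSb : (S : Subgroup N) ≠ ⊥ := S.ne_bot_of_dvd_card hrd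
    have h1 : (S : Subgroup N).map N.subtype = N := by
      refine hN.2.2 _ inferInstance (map_subtype_le _) ?_
      intro h
      exact hSb ((map_eq_bot_iff_of_injective _ N.subtype_injective).1 h)
    have h2 : IsPGroup r ((S : Subgroup N).map N.subtype) := S.2.map _
    rwa [h1] at h2
  -- the largest prime
  have hpf : (Nat.card X).primeFactors.Nonempty := by
    rw [Nat.nonempty_primeFactors]; exact Finite.one_lt_card
  obtain ⟨q, hq, hqmax⟩ := Finset.exists_max_image _ id hpf
  have hqp := Nat.prime_of_mem_primeFactors hq
  have hqmax' : ∀ p : ℕ, p.Prime → p ∣ Nat.card X → p ≤ q := fun p hp hd =>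
    hqmax p (Nat.mem_primeFactors.2 ⟨hp, hd, Nat.card_pos.ne'⟩)
  have := Fact.mk hqp
  obtain ⟨Q⟩ : Nonempty (Sylow q X) := inferInstance
  have hs := QuotientGroup.mk'_surjective N
  have hQN := ss_sylow_normal (hquot N hN.1 hN.2.1) q (fun p hp hd => hqmax' p hp (by
    rw [card_eq_card_quotient_mul_card_subgroup N]; exact hd.mul_right _)) (Q.mapSurjective hs)
  obtain ⟨hQNn, hF⟩ := frat N Q hQN
  change normalizer ((Q : Subgroup X) : Set X) ⊔ N = ⊤ at hF
  have goalA : ∃ R : Sylow r X, (R : Subgroup X).Normal := by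
    by_cases hqr : q = r
    · subst hqr
      refine ⟨Q, ?_⟩
      have h1 : N ≤ Q := hNr.le_sylow_of_normal Q
      rw [sup_eq_left.2 (h1.trans le_normalizer)] at hF
      exact normalizer_eq_top_iff.1 hF
    · have hQnn : ¬ (Q : Subgroup X).Normal := by
        intro hn
        have hQb : (Q : Subgroup X) ≠ ⊥ := Q.ne_bot_of_dvd_card (Nat.dvd_of_mem_primeFactors hq)
        have h1 := huniq Q hn hQb
        have h2 := IsPGroup.disjoint_of_ne q r hqr Q N Q.2 hNr
        rw [disjoint_iff, inf_eq_right.2 h1] at h2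
        exact hN.2.1 h2
      have hWt : (Q : Subgroup X) ⊔ N = ⊤ := by
        by_contra hW
        have h1 := ss_sylow_normal (hsub _ hW) q (fun p hp hd => hqmax' p hp
          (hd.trans (card_subgroup_dvd_card _))) (Q.subtype le_sup_left)
        have h2 := (Q.subtype (le_sup_left (b := N))).characteristic_of_normal h1
        have h3 : (map ((Q : Subgroup X) ⊔ N).subtype (Q.subtype (le_sup_left (b := N)) : Subgroup _)).Normal :=
          inferInstance
        rw [Sylow.coe_subtype, subgroupOf_map_subtype, inf_eq_left.2 le_sup_left] at h3
        exact hQnn h3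
      have hidx : ¬ r ∣ N.index := by
        intro hd
        have h1 : N.index = N.relIndex Q := by
          rw [← relIndex_sup_right, hWt, relIndex_top_right]
        rw [h1] at hd
        have h2 := hd.trans (relIndex_dvd_card N Q)
        obtain ⟨k, hk⟩ := Q.2.exists_card_eq
        rw [hk] at h2
        exact hqr ((Nat.prime_dvd_prime_iff_eq hr hqp).1 (hr.dvd_of_dvd_pow h2)).symm
      exact ⟨hNr.toSylow hidx, hN.1⟩
  obtain ⟨R, hRn⟩ := goalA
  have hNR : N ≤ R := hNr.le_sylow_of_normal R
  have hRN : N = R := by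
    by_contra hne
    have hRb : Nontrivial R := by
      rw [nontrivial_iff_ne_bot]
      intro h
      rw [h, le_bot_iff] at hNR
      exact hN.2.1 hNR
    have hZ : N ≤ (center R).map (R : Subgroup X).subtype := by
      refine huniq _ inferInstance ?_
      intro h
      exact R.2.bot_lt_center.ne' ((map_eq_bot_iff_of_injective _ (R : Subgroup X).subtype_injective).1 h)
    obtain ⟨H, hH⟩ := exists_right_complement'_of_coprime R.card_coprime_index
    have hW : H ⊔ N ≠ ⊤ := by
      intro h
      have h1 := index_le_card_of_sup h
      rw [hH.index_eq_card] at h1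
      exact hne (eq_of_le_of_card_ge hNR h1)
    obtain ⟨A1, hA1, hp, hnorm⟩ := ss_min_in (H ⊔ N) N (hsub _ hW) le_sup_right hN.2.1
    have hRA : (R : Subgroup X) ≤ normalizer (A1 : Set X) := by
      refine le_trans ?_ (centralizer_le_normalizer _)
      intro x hx y hy
      obtain ⟨z, hz, rfl⟩ := hZ (hA1 hy)
      exact congrArg Subtype.val (((mem_center_iff.1 hz) ⟨x, hx⟩).symm)
    have hA1n : A1.Normal := by
      rw [← normalizer_eq_top_iff, ← top_le_iff, ← hH.sup_eq_top]
      exact sup_le hRA (le_sup_left.trans hnorm)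
    have hA1b : A1 ≠ ⊥ := by
      rintro rfl
      simp [Nat.not_prime_one] at hp
    rw [hN.2.2 A1 hA1n hA1 hA1b] at hp
    exact hnp hp
  refine ⟨r, hr, N, hN, hNr, ?_, hle⟩
  rw [hRN]
  exact R.not_dvd_index

lemma ss_quot_of_sup {G : Type*} [Group G] (T K : Subgroup G) [K.Normal] (h : T ⊔ K = ⊤)
    (hT : IsSupersoluble T) : IsSupersoluble (G ⧸ K) := by
  refine ss_surj ((QuotientGroup.mk' K).comp T.subtype) ?_ hT
  rw [← MonoidHom.range_eq_top, MonoidHom.range_comp, range_subtype]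
  have := congrArg (Subgroup.map (QuotientGroup.mk' K)) h
  rw [Subgroup.map_sup, map_top_of_surjective _ (QuotientGroup.mk'_surjective K),
    (Subgroup.map_eq_bot_iff K).2 (by rw [QuotientGroup.ker_mk']), sup_bot_eq] at this
  exact this

lemma main_card (G : Type*) [Group G] [Finite G] (hG : IsMinimalNonsupersoluble G)
    (h : ∀ H : Subgroup G, IsNMaximal 3 H → IsKUSubnormal H) :
    ∃ t : ℕ, t.Prime ∧ IsSylowSubgroup t (ssResidual G) ∧
      (Nat.card (frattiniIn (ssResidual G)) = 1 ∨ Nat.card (frattiniIn (ssResidual G)) = t) := by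
  have hsol := main_solvable G hG h
  obtain ⟨L, -, ⟨hLn, hL⟩, hmax⟩ := exists_max_normal
    (fun L : Subgroup G => ∃ _ : L.Normal, ¬ IsSupersoluble (G ⧸ L)) (T := ⊥)
    ⟨inferInstance, fun hs => hG.1 (ss_surj (QuotientGroup.quotientBot (G := G)).toMonoidHom
      (QuotientGroup.quotientBot (G := G)).surjective hs)⟩
  have hs := QuotientGroup.mk'_surjective L
  have lemF : ∀ T : Subgroup G, T ⊔ L = ⊤ → T = ⊤ := by
    intro T hT
    by_contra hne
    exact hL (ss_quot_of_sup T L hT (hG.2 T hne))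
  have hmapbot : ∀ B : Subgroup G, B.map (QuotientGroup.mk' L) = ⊥ ↔ B ≤ L := by
    intro B
    rw [Subgroup.map_eq_bot_iff, QuotientGroup.ker_mk']
  have hmaple : ∀ B C : Subgroup G,
      B.map (QuotientGroup.mk' L) ≤ C.map (QuotientGroup.mk' L) → B ≤ C ⊔ L := by
    intro B C hBC
    rw [map_le_iff_le_comap, comap_map_eq, QuotientGroup.ker_mk'] at hBC
    exact hBC
  obtain ⟨r, hr, N, hN, hNr, hNi, hNle⟩ := X_main (G ⧸ L) hL (by
      intro A hA
      have h1 : A.comap (QuotientGroup.mk' L) ≠ ⊤ := by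
        intro h2
        apply hA
        rw [← map_comap_eq_self_of_surjective hs A, h2, map_top_of_surjective _ hs]
      refine ss_surj ((QuotientGroup.mk' L).subgroupComap A) ?_ (hG.2 _ h1)
      exact MonoidHom.subgroupComap_surjective_of_surjective _ _ hs)
    (by
      intro K hK hKb
      set S := K.comap (QuotientGroup.mk' L) with hS
      have hSn : S.Normal := hK.comap _
      have hLS : L ≤ S := by
        have := ker_le_comap (QuotientGroup.mk' L) K
        rwa [QuotientGroup.ker_mk'] at this
      have hSS : IsSupersoluble (G ⧸ S) := by
        by_contra hns
        have h1 := hmax S ⟨hSn, hns⟩ hLS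
        apply hKb
        rw [← map_comap_eq_self_of_surjective hs K, ← hS, hmapbot, h1]
      refine ss_surj (QuotientGroup.map S K (QuotientGroup.mk' L) le_rfl) ?_ hSS
      exact QuotientGroup.map_surjective_of_surjective _ _ _
        ((QuotientGroup.mk_surjective (s := K)).comp hs) _)
  have := Fact.mk hr
  have hNn := hN.1
  obtain ⟨P⟩ : Nonempty (Sylow r G) := inferInstance
  have hPN : (P : Subgroup G).map (QuotientGroup.mk' L) = N :=
    (hNr.toSylow hNi).is_maximal' (P.mapSurjective hs).2 (hNr.le_sylow_of_normal (P.mapSurjective hs))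
  have hPL : ¬ (P : Subgroup G) ≤ L := by
    intro hle
    rw [(hmapbot P).2 hle] at hPN
    exact hN.2.1 hPN.symm
  have hPn : (P : Subgroup G).Normal :=
    normalizer_eq_top_iff.1 (lemF _ (frat L P (hPN ▸ hNn)).2)
  obtain ⟨H, hH⟩ := exists_right_complement'_of_coprime P.card_coprime_index
  have hHt : H ≠ ⊤ := by
    intro h1
    rw [h1] at hH
    have := isComplement'_top_right.1 hH
    exact hPL (this ▸ bot_le)
  have hHr : ¬ r ∣ Nat.card H := by
    rw [← hH.symm.index_eq_card]
    exact P.not_dvd_index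
  have hGP : IsSupersoluble (G ⧸ (P : Subgroup G)) :=
    ss_quot_of_sup H P (by rw [sup_comm]; exact hH.sup_eq_top) (hG.2 H hHt)
  have hD : ∀ (K : Subgroup G) (_ : K.Normal), IsSupersoluble (G ⧸ K) → (P : Subgroup G) ≤ K := by
    intro K hK hKs
    have hK'n : (K.map (QuotientGroup.mk' L)).Normal := hK.map _ hs
    have h1 : N ≤ K.map (QuotientGroup.mk' L) := by
      refine hNle _ hK'n ?_
      refine ss_surj (QuotientGroup.map K (K.map (QuotientGroup.mk' L)) (QuotientGroup.mk' L)
        (le_comap_map _ _)) ?_ hKs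
      exact QuotientGroup.map_surjective_of_surjective _ _ _
        ((QuotientGroup.mk_surjective (s := K.map (QuotientGroup.mk' L))).comp hs) _
    rw [← hPN] at h1
    have h2 := hmaple _ _ h1
    have h3 : H ⊔ K = ⊤ := by
      apply lemF
      rw [← top_le_iff, ← hH.sup_eq_top, sup_assoc]
      exact sup_le (h2.trans le_sup_right) le_sup_left
    have h4 : K.index ∣ Nat.card H := by
      have : K.index = K.relIndex H := by
        rw [← relIndex_sup_right, h3, relIndex_top_right]
      rw [this]; exact relIndex_dvd_card _ _
    have h5 : K.relIndex P ∣ K.index := relIndex_dvd_index_of_normal _ _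
    have h6 : K.relIndex P ∣ Nat.card P := relIndex_dvd_card _ _
    rw [← relIndex_eq_one]
    obtain ⟨k, hk⟩ := P.2.exists_card_eq
    rw [hk] at h6
    obtain ⟨j, -, hj⟩ := (Nat.dvd_prime_pow hr).1 h6
    rcases Nat.eq_zero_or_pos j with h0 | h0
    · rw [hj, h0, pow_zero]
    · exfalso
      apply hHr
      refine dvd_trans ?_ (h5.trans h4)
      rw [hj]
      exact dvd_pow_self r h0.ne'
  have hres : ssResidual G = P := by
    apply le_antisymm
    · exact iInf₂_le (P : Subgroup G) ⟨hPn, hGP⟩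
    · refine le_iInf₂ ?_
      rintro K ⟨hK, hKs⟩
      exact hD K hK hKs
  -- no proper `KU`-subnormal subgroup contains `H`
  have hno : ∀ B : Subgroup G, IsNMaximal 3 B → H ≤ B → B ≠ ⊤ → False := by
    intro B hB hHB hBt
    obtain ⟨T, hBT, hT, hcase⟩ := ku_top (h B hB) hBt
    have key : ∀ S : Subgroup G, (P : Subgroup G) ≤ S → H ≤ S → S = ⊤ := by
      intro S h1 h2
      rw [← top_le_iff, ← hH.sup_eq_top]
      exact sup_le h1 h2
    rcases hcase with hTn | ⟨K, hK, hKT, hss⟩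
    · obtain ⟨S, hTS, ⟨hSn, hSt⟩, hSmax⟩ := exists_max_normal
        (fun R : Subgroup G => R.Normal ∧ R ≠ ⊤) (T := T) ⟨hTn, hT⟩
      have h1 := simple_quot S hSt (fun S' hS' hle hne => hSmax S' ⟨hS', hne⟩ hle)
      have hc := IsSimpleGroup.comm_iff_isSolvable.mpr (inferInstance : Group.IsSolvable (G ⧸ S))
      have h2 : IsCyclic (G ⧸ S) := by
        letI : CommGroup (G ⧸ S) := { (inferInstance : Group (G ⧸ S)) with mul_comm := hc }
        exact IsSimpleGroup.isCyclic
      exact hSt (key S (hD S hSn ss_cyclic) (hHB.trans (hBT.trans hTS)))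
    · exact hT (key T ((hD K hK hss).trans hKT) (hHB.trans hBT))
  set A := (P : Subgroup G) ⊓ L with hAdef
  have hAn : A.Normal := inferInstanceAs ((P : Subgroup G) ⊓ L).Normal
  have hAP : A ≤ P := inf_le_left
  have hdisj : ∀ x, x ∈ (P : Subgroup G) → x ∈ H → x = 1 := by
    intro x h1 h2
    exact (disjoint_def.1 hH.disjoint) h1 h2
  have hAcard : Nat.card A = 1 ∨ Nat.card A = r := by
    by_cases hAb : A = ⊥
    · left; rw [hAb, card_bot]
    right
    have hWt : H ⊔ A ≠ ⊤ := by
      intro h1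
      have h2 := index_le_card_of_sup h1
      rw [hH.index_eq_card] at h2
      exact hPL ((eq_of_le_of_card_ge hAP h2).ge.trans inf_le_right)
    obtain ⟨A1, hA1, hp, hnorm⟩ := ss_min_in (H ⊔ A) A (hG.2 _ hWt) le_sup_right hAb
    have hA1b : A1 ≠ ⊥ := by
      rintro rfl
      simp [Nat.not_prime_one] at hp
    have heq : A1 = A := by
      by_contra hne
      have h1 : H < H ⊔ A1 := by
        refine lt_of_le_of_ne le_sup_left ?_
        intro h2
        apply hA1b
        rw [eq_bot_iff]
        intro x hx
        rw [mem_bot]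
        exact hdisj x (hAP (hA1 hx)) ((le_sup_right.trans h2.ge) hx)
      have h2 : H ⊔ A1 < H ⊔ A := by
        refine lt_of_le_of_ne (sup_le_sup_left hA1 _) ?_
        intro h3
        apply hne
        refine le_antisymm hA1 ?_
        intro x hx
        have hx' : x ∈ ((H ⊔ A1 : Subgroup G) : Set G) := by
          rw [h3]; exact (le_sup_right : A ≤ H ⊔ A) hx
        rw [coe_mul_of_left_le_normalizer_right H A1 (le_sup_left.trans hnorm)] at hx'
        obtain ⟨y, hy, a, ha, rfl⟩ := hx'
        have : y = 1 := by
          refine hdisj y ?_ hy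
          have := mul_mem (hAP hx) (inv_mem (hAP (hA1 ha)))
          simpa using this
        simpa [this] using ha
      obtain ⟨B, hB, hHB, hBt⟩ := exists_three h1 h2 hWt.lt_top
      exact hno B hB hHB hBt
    rw [heq] at hp
    obtain ⟨k, hk⟩ := P.2.exists_card_eq
    have hd : Nat.card A ∣ r ^ k := by
      rw [← hk]; exact card_dvd_of_le hAP
    exact (Nat.prime_dvd_prime_iff_eq hp hr).1 (hp.dvd_of_dvd_pow hd)
  refine ⟨r, hr, ?_, ?_⟩
  · rw [hres]; exact ⟨P.2, P.not_dvd_index⟩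
  rw [hres]
  set F := frattiniIn (P : Subgroup G) with hF
  have hFP : F ≤ P := map_subtype_le _
  have hFn : F.Normal := inferInstanceAs ((frattini (P : Subgroup G)).map (P : Subgroup G).subtype).Normal
  have hFL : F ≤ L := by
    by_contra hne
    have h1 : F.map (QuotientGroup.mk' L) = N := by
      refine hN.2.2 _ (hFn.map _ hs) ?_ ?_
      · rw [← hPN]; exact map_mono hFP
      · rwa [Ne, hmapbot]
    have h2 : (P : Subgroup G) ≤ F ⊔ L := hmaple _ _ (by rw [hPN, h1])
    have h3 : A.subgroupOf P ⊔ frattini (P : Subgroup G) = ⊤ := by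
      rw [sup_comm, ← top_le_iff]
      intro x _
      have hx : (x : G) ∈ ((F ⊔ L : Subgroup G) : Set G) := h2 x.2
      rw [mul_normal] at hx
      obtain ⟨f, hf, l, hl, hfl⟩ := hx
      simp only at hfl
      obtain ⟨f', hf', rfl⟩ := hf
      have hl' : l = ((f'⁻¹ * x : (P : Subgroup G)) : G) := by
        rw [coe_mul, ← hfl]; simp
      have hx2 : x = f' * (f'⁻¹ * x) := by group
      rw [hx2]
      refine mul_mem_sup hf' ?_
      rw [mem_subgroupOf, ← hl']
      exact ⟨hl' ▸ (f'⁻¹ * x).2, hl⟩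
    have h4 := frattini_nongenerating h3
    rw [subgroupOf_eq_top] at h4
    exact hPL (h4.trans inf_le_right)
  have hFA : Nat.card F ∣ Nat.card A := card_dvd_of_le (le_inf hFP hFL)
  rcases hAcard with h1 | h1
  · left; rw [h1] at hFA; exact Nat.dvd_one.1 hFA
  · rw [h1] at hFA; exact (Nat.dvd_prime hr).1 hFA

end helpers

/-- Let `G` be a minimal nonsupersoluble group in which every `3`-maximal subgroup is
`K`-`𝔘`-subnormal.  Then `|Φ(G^𝔘)|` is `1` or a prime; more precisely `G^𝔘` is a Sylow
`t`-subgroup for some prime `t` and `|Φ(G^𝔘)| ≤ t`. -/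
theorem frattini_ssResidual_small_of_3maximal_KUsubnormal
    (G : Type*) [Group G] [Finite G] (hG : IsMinimalNonsupersoluble G)
    (h : ∀ H : Subgroup G, IsNMaximal 3 H → IsKUSubnormal H) :
    (Nat.card (frattiniIn (ssResidual G)) = 1 ∨
      (Nat.card (frattiniIn (ssResidual G))).Prime) ∧
    ∃ t : ℕ, t.Prime ∧ IsSylowSubgroup t (ssResidual G) ∧
      Nat.card (frattiniIn (ssResidual G)) ≤ t := by
  obtain ⟨t, ht, hS, hc⟩ := main_card G hG h
  refine ⟨?_, t, ht, hS, ?_⟩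
  · rcases hc with hc | hc
    · exact Or.inl hc
    · right; rw [hc]; exact ht
  · rcases hc with hc | hc
    · rw [hc]; exact ht.one_lt.le
    · exact hc.le
end
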